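/- For all real x ≥ 1 and all t ∈ [0,1], one has ∑_{n ≤ x} t^{ω(n)} Δ(n)/n < 16748 · (log(ex))^{4t/π}. -/

import Mathlib

/-- The Erdős–Hooley Δ-function: the maximum over real `u` of the number of
divisors of `n` in the interval `(e^u, e^{u+1}]`. -/
noncomputable def hooleyDelta (n : ℕ) : ℕ :=
  sSup {m : ℕ | ∃ u : ℝ,
    m = (n.divisors.filter (fun d : ℕ => Real.exp u < (d : ℝ) ∧ (d : ℝ) ≤ Real.exp (u + 1))).card}

/-!
Integrating a Fejér kernel against the measure `∑_{d ∣ n} δ_{log d}` gives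
`Δ(n) ≪ ∫_0^{1/2} |τ(n, θ)| dθ`, where `τ(n, θ) = ∑_{d ∣ n} d ^ (iθ)`. By Rankin's trick with
`ε = 1 / log (e x)` it is enough to bound `∑ t ^ ω(n) |τ(n, θ)| n ^ (-1-ε)`. This is controlled
by its Euler product, hence by `∑_p |1 + p ^ (iθ)| p ^ (-1-ε)`. As `|1 + e ^ (iφ)|` has mean
`4 / π`, its Fourier expansion turns the sum over primes into a combination of the values
`log |ζ(1 + ε - i n θ)|`, in which the term `n = 0` contributes `(4 / π) log (1 / ε)` and the
terms `n ≠ 0` contribute `(2 - 4 / π) log (1 / θ) + O(1)`. The singularity `θ ^ (4 / π - 2)` thus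
produced is integrable at `0`. When `log (e x) ≤ 100`, the bound `Δ ≤ d` already suffices.
-/

open MeasureTheory Set

section Zeta

/-- The Mellin-type integral of the centred sawtooth, through which Abel summation expresses `ζ`
on `1 < re s` (see `riemannZeta_eq_sub_sawtoothMellin`). -/
noncomputable def sawtoothMellin (s : ℂ) : ℂ :=
  ∫ t in Ioi (1 : ℝ), ((Int.fract t - 1 / 2 : ℝ) : ℂ) * (t : ℂ) ^ (-(s + 1))

lemma abs_fract_sub_half_le (t : ℝ) : |Int.fract t - 1 / 2| ≤ 1 / 2 := by
  rw [abs_le]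
  constructor <;> linarith [Int.fract_nonneg t, (Int.fract_lt_one t).le]

lemma integrableOn_Ioi_cpow_neg_add_one {s : ℂ} (hs : 0 < s.re) :
    IntegrableOn (fun t : ℝ ↦ (t : ℂ) ^ (-(s + 1))) (Ioi 1) :=
  integrableOn_Ioi_cpow_of_lt (by simpa using hs) zero_lt_one

lemma integrableOn_Ioi_rpow_neg_add_one {σ : ℝ} (hσ : 0 < σ) :
    IntegrableOn (fun t : ℝ ↦ t ^ (-(σ + 1))) (Ioi 1) :=
  integrableOn_Ioi_rpow_of_lt (by linarith) zero_lt_one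

lemma integral_Ioi_rpow_neg_add_one {σ : ℝ} (hσ : 0 < σ) :
    ∫ t in Ioi (1 : ℝ), t ^ (-(σ + 1)) = 1 / σ := by
  rw [integral_Ioi_rpow_of_lt (by linarith) zero_lt_one, Real.one_rpow,
    show -(σ + 1) + 1 = -σ by ring, neg_div_neg_eq]

lemma integrableOn_fract_sub_half_mul_cpow {s : ℂ} (hs : 0 < s.re) :
    IntegrableOn (fun t : ℝ ↦ ((Int.fract t - 1 / 2 : ℝ) : ℂ) * (t : ℂ) ^ (-(s + 1))) (Ioi 1) := by
  refine (integrableOn_Ioi_cpow_neg_add_one hs).bdd_mul (c := 1 / 2) ?_ (.of_forall fun t ↦ ?_)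
  · exact (by fun_prop :
      Measurable fun t : ℝ ↦ ((Int.fract t - 1 / 2 : ℝ) : ℂ)).aestronglyMeasurable
  · rw [Complex.norm_real]
    exact abs_fract_sub_half_le t

lemma riemannZeta_eq_mul_integral_floor {s : ℂ} (hs : 1 < s.re) :
    riemannZeta s = s * ∫ t in Ioi (1 : ℝ), (⌊t⌋₊ : ℂ) * (t : ℂ) ^ (-(s + 1)) := by
  have abel := LSeries_eq_mul_integral_of_nonneg (fun _ ↦ 1) zero_le_one hs
    (by simpa using Asymptotics.isBigO_refl _ _) (fun _ ↦ zero_le_one)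
  simp only [Complex.ofReal_one, Finset.sum_const, Nat.card_Icc, add_tsub_cancel_right,
    nsmul_eq_mul, mul_one] at abel
  exact (LSeries_one_eq_riemannZeta hs).symm.trans abel

lemma natFloor_mul_cpow_eq {s : ℂ} {t : ℝ} (ht : 0 < t) :
    (⌊t⌋₊ : ℂ) * (t : ℂ) ^ (-(s + 1)) = (t : ℂ) ^ (-s) - 1 / 2 * (t : ℂ) ^ (-(s + 1)) -
      ((Int.fract t - 1 / 2 : ℝ) : ℂ) * (t : ℂ) ^ (-(s + 1)) := by
  have ht' : (t : ℂ) ≠ 0 := by exact_mod_cast ht.ne'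
  have hpow : (t : ℂ) ^ (-s) = t * (t : ℂ) ^ (-(s + 1)) := by
    rw [show -s = 1 + -(s + 1) by ring, Complex.cpow_add _ _ ht', Complex.cpow_one]
  have hfloor : (⌊t⌋₊ : ℂ) = ((t - Int.fract t : ℝ) : ℂ) := by
    rw [Int.self_sub_fract, ← natCast_floor_eq_intCast_floor ht.le, Complex.ofReal_natCast]
  rw [hpow, hfloor]
  push_cast
  ring

lemma riemannZeta_eq_sub_sawtoothMellin {s : ℂ} (hs : 1 < s.re) :
    riemannZeta s = 1 / (s - 1) + 1 / 2 - s * sawtoothMellin s := by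
  have hs1 : s - 1 ≠ 0 := by
    rw [sub_ne_zero]; rintro rfl; simp at hs
  have hs1' : -s + 1 ≠ 0 := by rwa [neg_add_eq_sub, ← neg_sub, neg_ne_zero]
  have hs0 : s ≠ 0 := by rintro rfl; norm_num at hs
  have hre : 0 < s.re := by linarith
  have hint : IntegrableOn (fun t : ℝ ↦ (t : ℂ) ^ (-s)) (Ioi 1) :=
    integrableOn_Ioi_cpow_of_lt (by simpa using hs) zero_lt_one
  have hint' := (integrableOn_Ioi_cpow_neg_add_one hre).const_mul (1 / 2)
  rw [riemannZeta_eq_mul_integral_floor hs,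
    setIntegral_congr_fun measurableSet_Ioi fun t ht ↦ natFloor_mul_cpow_eq (zero_lt_one.trans ht),
    integral_sub (by exact hint.sub hint') (integrableOn_fract_sub_half_mul_cpow hre),
    integral_sub hint hint', integral_const_mul,
    integral_Ioi_cpow_of_lt (by simpa using hs) zero_lt_one,
    integral_Ioi_cpow_of_lt (by simpa using hre) zero_lt_one, ← sawtoothMellin]
  simp only [Complex.ofReal_one, Complex.one_cpow, neg_add_rev, neg_add_cancel_comm]
  field_simp
  ring

lemma norm_sawtoothMellin_le {s : ℂ} (hs : 0 < s.re) : ‖sawtoothMellin s‖ ≤ 1 / (2 * s.re) := by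
  have bound : ∀ t ∈ Ioi (1 : ℝ), ‖((Int.fract t - 1 / 2 : ℝ) : ℂ) * (t : ℂ) ^ (-(s + 1))‖ ≤
      1 / 2 * t ^ (-(s.re + 1)) := fun t ht ↦ by
    have ht0 : 0 < t := zero_lt_one.trans ht
    rw [norm_mul, Complex.norm_real, Complex.norm_cpow_eq_rpow_re_of_pos ht0, Complex.neg_re,
      Complex.add_re, Complex.one_re]
    gcongr
    exact abs_fract_sub_half_le t
  calc ‖sawtoothMellin s‖
      ≤ ∫ t in Ioi (1 : ℝ), 1 / 2 * t ^ (-(s.re + 1)) :=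
        norm_integral_le_of_norm_le ((integrableOn_Ioi_rpow_neg_add_one hs).const_mul _)
          ((ae_restrict_iff' measurableSet_Ioi).mpr (.of_forall bound))
    _ = 1 / (2 * s.re) := by
        rw [integral_const_mul, integral_Ioi_rpow_neg_add_one hs, one_div_mul_one_div]

lemma norm_sawtoothMellin_add_sub_le {s : ℂ} (hs : 0 < s.re) {δ : ℝ} (hδ : 0 ≤ δ) :
    ‖sawtoothMellin (s + δ) - sawtoothMellin s‖ ≤ (1 / s.re - 1 / (s.re + δ)) / 2 := by
  have hsδ : 0 < (s + δ).re := by simp; linarith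
  have hint := integrableOn_Ioi_rpow_neg_add_one hs
  have hint' := integrableOn_Ioi_rpow_neg_add_one (add_pos_of_pos_of_nonneg hs hδ)
  have bound : ∀ t ∈ Ioi (1 : ℝ), ‖((Int.fract t - 1 / 2 : ℝ) : ℂ) * (t : ℂ) ^ (-(s + δ + 1)) -
      ((Int.fract t - 1 / 2 : ℝ) : ℂ) * (t : ℂ) ^ (-(s + 1))‖ ≤
      1 / 2 * (t ^ (-(s.re + 1)) - t ^ (-(s.re + δ + 1))) := fun t ht ↦ by
    have ht0 : 0 < t := zero_lt_one.trans ht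
    have hshift : (t : ℂ) ^ (-(s + δ + 1)) = (t : ℂ) ^ (-(s + 1)) * (t ^ (-δ) : ℝ) := by
      rw [Complex.ofReal_cpow ht0.le, ← Complex.cpow_add _ _ (by exact_mod_cast ht0.ne')]
      congr 1; push_cast; ring
    have hshift' : t ^ (-(s.re + δ + 1)) = t ^ (-(s.re + 1)) * t ^ (-δ) := by
      rw [← Real.rpow_add ht0]; congr 1; ring
    have hle : t ^ (-δ) ≤ 1 := Real.rpow_le_one_of_one_le_of_nonpos (le_of_lt ht) (by linarith)
    have hdiff : ‖((t ^ (-δ) : ℝ) : ℂ) - 1‖ = 1 - t ^ (-δ) := by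
      rw [norm_sub_rev, ← Complex.ofReal_one, ← Complex.ofReal_sub, Complex.norm_real,
        Real.norm_of_nonneg (sub_nonneg.mpr hle)]
    rw [← mul_sub, norm_mul, Complex.norm_real, hshift, hshift', ← mul_sub_one, ← mul_one_sub,
      norm_mul, Complex.norm_cpow_eq_rpow_re_of_pos ht0, hdiff, Complex.neg_re, Complex.add_re,
      Complex.one_re]
    have : 0 ≤ 1 - t ^ (-δ) := sub_nonneg.mpr hle
    gcongr
    exact abs_fract_sub_half_le t
  rw [sawtoothMellin, sawtoothMellin, ← integral_sub
    (integrableOn_fract_sub_half_mul_cpow hsδ) (integrableOn_fract_sub_half_mul_cpow hs)]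
  calc _ ≤ ∫ t in Ioi (1 : ℝ), 1 / 2 * (t ^ (-(s.re + 1)) - t ^ (-(s.re + δ + 1))) :=
        norm_integral_le_of_norm_le ((hint.sub hint').const_mul _)
          ((ae_restrict_iff' measurableSet_Ioi).mpr (.of_forall bound))
    _ = (1 / s.re - 1 / (s.re + δ)) / 2 := by
        rw [integral_const_mul, integral_sub hint hint', integral_Ioi_rpow_neg_add_one hs,
          integral_Ioi_rpow_neg_add_one (by linarith)]
        ring

lemma norm_div_two_mul_re_le {s : ℂ} (hs : 1 ≤ s.re) : ‖s‖ / (2 * s.re) ≤ 1 / 2 + |s.im| / 2 := by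
  have hnorm := s.norm_le_abs_re_add_abs_im
  rw [abs_of_pos (zero_lt_one.trans_le hs)] at hnorm
  rw [div_le_iff₀ (by linarith)]
  nlinarith [mul_le_mul_of_nonneg_left hs (abs_nonneg s.im)]

lemma norm_riemannZeta_le {s : ℂ} (hs : 1 < s.re) :
    ‖riemannZeta s‖ ≤ 1 / ‖s - 1‖ + 1 + |s.im| / 2 := by
  have hM : ‖s‖ * ‖sawtoothMellin s‖ ≤ 1 / 2 + |s.im| / 2 :=
    calc ‖s‖ * ‖sawtoothMellin s‖ ≤ ‖s‖ * (1 / (2 * s.re)) := by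
          gcongr; exact norm_sawtoothMellin_le (by linarith)
      _ ≤ 1 / 2 + |s.im| / 2 := by rw [mul_one_div]; exact norm_div_two_mul_re_le hs.le
  rw [riemannZeta_eq_sub_sawtoothMellin hs]
  calc ‖1 / (s - 1) + 1 / 2 - s * sawtoothMellin s‖
      ≤ ‖1 / (s - 1)‖ + ‖(1 / 2 : ℂ)‖ + ‖s * sawtoothMellin s‖ :=
        (norm_sub_le _ _).trans (by gcongr; exact norm_add_le _ _)
    _ = 1 / ‖s - 1‖ + 1 / 2 + ‖s‖ * ‖sawtoothMellin s‖ := by norm_num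
    _ ≤ 1 / ‖s - 1‖ + 1 + |s.im| / 2 := by linarith

lemma one_sub_le_norm_sub_one_mul_riemannZeta {s : ℂ} (hs : 1 < s.re) :
    1 - ‖s‖ * ‖s - 1‖ / 2 ≤ ‖(s - 1) * riemannZeta s‖ := by
  have hs1 : s - 1 ≠ 0 := by
    rw [sub_ne_zero]; rintro rfl; simp at hs
  have hM : ‖sawtoothMellin s‖ ≤ 1 / 2 :=
    (norm_sawtoothMellin_le (by linarith)).trans
      (one_div_le_one_div_of_le two_pos (by linarith))
  have hmain : 1 ≤ ‖(s + 1) / 2‖ := by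
    refine le_trans ?_ (Complex.re_le_norm _)
    simp only [Complex.div_ofNat_re, Complex.add_re, Complex.one_re]
    linarith
  have hζ : (s - 1) * riemannZeta s = (s + 1) / 2 - s * (s - 1) * sawtoothMellin s := by
    rw [riemannZeta_eq_sub_sawtoothMellin hs]
    field_simp
    ring
  calc 1 - ‖s‖ * ‖s - 1‖ / 2 ≤ ‖(s + 1) / 2‖ - ‖s * (s - 1) * sawtoothMellin s‖ := by
        rw [norm_mul, norm_mul, div_eq_mul_one_div]
        gcongr
    _ ≤ ‖(s - 1) * riemannZeta s‖ := hζ ▸ norm_sub_norm_le _ _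

lemma one_fifth_le_norm_sub_one_mul_riemannZeta {s : ℂ} (hs : 1 < s.re) (hs' : s.re ≤ 101 / 100)
    (him : |s.im| ≤ 1) : 1 / 5 ≤ ‖(s - 1) * riemannZeta s‖ := by
  refine le_trans ?_ (one_sub_le_norm_sub_one_mul_riemannZeta hs)
  have him' : s.im ^ 2 ≤ 1 := by simpa using sq_le_one_iff_abs_le_one s.im |>.mpr him
  have hsq : ‖s‖ ^ 2 = s.re ^ 2 + s.im ^ 2 := by rw [Complex.sq_norm, Complex.normSq_apply]; ring
  have hsq' : ‖s - 1‖ ^ 2 = (s.re - 1) ^ 2 + s.im ^ 2 := by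
    rw [Complex.sq_norm, Complex.normSq_apply, Complex.sub_re, Complex.sub_im, Complex.one_re,
      Complex.one_im]
    ring
  nlinarith [sq_nonneg (‖s‖ - ‖s - 1‖)]

/- The inequality `3 + 4 cos φ + cos 2φ ≥ 0`, in the form `1 ≤ |ζ(σ)³ ζ(σ + iτ)⁴ ζ(σ + 2iτ)|`. -/
lemma div_le_norm_riemannZeta_pow_four {s : ℂ} (hs : 1 < s.re) (him : 1 ≤ |s.im|) :
    ((s.re - 1) / s.re) ^ 3 / (3 * |s.im|) ≤ ‖riemannZeta s‖ ^ 4 := by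
  set x := s.re - 1
  have hx : 0 < x := sub_pos.mpr hs
  have h341 := DirichletCharacter.norm_LFunction_product_ge_one (N := 1) 1 hx s.im
  rw [DirichletCharacter.LFunctionTrivChar, DirichletCharacter.LFunction_modOne_eq,
    DirichletCharacter.LFunction_modOne_eq, norm_mul, norm_mul, norm_pow, norm_pow,
    show (1 : ℂ) + x + Complex.I * s.im = s by apply Complex.ext <;> simp [x]] at h341
  have hone : ‖riemannZeta (1 + x)‖ ≤ s.re / x := by
    have h := norm_riemannZeta_le (s := 1 + x) (by simpa using hx)
    simp only [add_sub_cancel_left, Complex.norm_real, Real.norm_of_nonneg hx.le, Complex.add_im,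
      Complex.one_im, Complex.ofReal_im, add_zero, abs_zero, zero_div] at h
    rwa [show s.re = 1 + x by ring, add_div, div_self hx.ne']
  have htwo : ‖riemannZeta (1 + x + 2 * Complex.I * s.im)‖ ≤ 3 * |s.im| := by
    have h := norm_riemannZeta_le (s := 1 + x + 2 * Complex.I * s.im) (by simpa using hx)
    have hge : 2 ≤ ‖(1 : ℂ) + x + 2 * Complex.I * s.im - 1‖ := by
      refine le_trans ?_ (Complex.abs_im_le_norm _)
      simpa [abs_mul] using him
    have := one_div_le_one_div_of_le two_pos hge
    simp only [Complex.add_im, Complex.one_im, Complex.ofReal_im, Complex.mul_im, Complex.mul_re,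
      Complex.re_ofNat, Complex.im_ofNat, Complex.I_re, Complex.I_im, Complex.ofReal_re, abs_mul,
      mul_zero, mul_one, add_zero, zero_add, sub_zero, Nat.abs_ofNat] at h
    linarith
  have : 0 < s.re := by linarith
  rw [div_le_iff₀ (by linarith), ← one_le_div (by positivity)]
  calc 1 ≤ _ := h341
    _ ≤ (s.re / x) ^ 3 * ‖riemannZeta s‖ ^ 4 * (3 * |s.im|) := by gcongr
    _ = _ := by field_simp

lemma norm_riemannZeta_add_sub_le {s : ℂ} (hs : 1 < s.re) (him : 1 ≤ |s.im|) {δ : ℝ}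
    (hδ : 0 ≤ δ) : ‖riemannZeta (s + δ) - riemannZeta s‖ ≤ 3 * |s.im| * δ := by
  have hsδ : 1 < (s + δ).re := by simp; linarith
  have hpole : ∀ δ' : ℝ, 1 ≤ ‖s + δ' - 1‖ := fun δ' ↦
    him.trans (by simpa using Complex.abs_im_le_norm (s + δ' - 1))
  have hs1 := norm_pos_iff.mp (zero_lt_one.trans_le (hpole δ))
  have hs1' : s - 1 ≠ 0 := norm_pos_iff.mp (zero_lt_one.trans_le (by simpa using hpole 0))
  have hM : ‖sawtoothMellin (s + δ)‖ ≤ 1 / 2 :=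
    (norm_sawtoothMellin_le (by linarith)).trans (one_div_le_one_div_of_le two_pos (by linarith))
  have hΔM : ‖s‖ * ‖sawtoothMellin (s + δ) - sawtoothMellin s‖ ≤ δ * (1 / 2 + |s.im| / 2) :=
    calc _ ≤ ‖s‖ * ((1 / s.re - 1 / (s.re + δ)) / 2) := by
          gcongr; exact norm_sawtoothMellin_add_sub_le (by linarith) hδ
      _ = δ * (‖s‖ / (2 * s.re)) / (s.re + δ) := by field_simp; ring
      _ ≤ δ * (‖s‖ / (2 * s.re)) := div_le_self (by positivity) (by linarith)
      _ ≤ δ * (1 / 2 + |s.im| / 2) := by gcongr; exact norm_div_two_mul_re_le hs.le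
  have hsplit : riemannZeta (s + δ) - riemannZeta s = -(δ / ((s + δ - 1) * (s - 1))) -
      (δ * sawtoothMellin (s + δ) + s * (sawtoothMellin (s + δ) - sawtoothMellin s)) := by
    rw [riemannZeta_eq_sub_sawtoothMellin hs, riemannZeta_eq_sub_sawtoothMellin hsδ]
    field_simp
    ring
  have hpoles : ‖-((δ : ℂ) / ((s + δ - 1) * (s - 1)))‖ ≤ δ := by
    rw [norm_neg, norm_div, Complex.norm_real, Real.norm_of_nonneg hδ, norm_mul]
    exact div_le_self hδ (one_le_mul_of_one_le_of_one_le (hpole δ) (by simpa using hpole 0))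
  calc ‖riemannZeta (s + δ) - riemannZeta s‖
      ≤ δ + (‖(δ : ℂ) * sawtoothMellin (s + δ)‖ +
          ‖s * (sawtoothMellin (s + δ) - sawtoothMellin s)‖) :=
        hsplit ▸ (norm_sub_le _ _).trans (add_le_add hpoles (norm_add_le _ _))
    _ ≤ δ + (δ * (1 / 2) + δ * (1 / 2 + |s.im| / 2)) := by
        rw [norm_mul, norm_mul, Complex.norm_real, Real.norm_of_nonneg hδ]
        gcongr
    _ ≤ 3 * |s.im| * δ := by nlinarith [mul_le_mul_of_nonneg_left him hδ]

/- If `ζ s` were smaller, then `ζ (s + δ)` with `δ` of order `|im s|⁻⁵` would be too small for the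
3-4-1 inequality. -/
lemma le_norm_riemannZeta {s : ℂ} (hs : 1 < s.re) (him : 1 ≤ |s.im|) :
    1 / (2000 * |s.im| ^ 4) ≤ ‖riemannZeta s‖ := by
  set τ := |s.im|
  have : 0 < τ := by linarith
  set δ : ℝ := 1 / (6000 * τ ^ 5) with hδ_def
  have hδ : 0 < δ := by positivity
  have hτδ : τ ^ 5 * δ = 1 / 6000 := by rw [hδ_def]; field_simp
  have hδ_le : δ ≤ 1 / 6000 := by
    rw [← hτδ]; exact le_mul_of_one_le_left hδ.le (one_le_pow₀ him)
  have hgoal : 1 / (2000 * τ ^ 4) = 3 * τ * δ := by rw [hδ_def]; field_simp; norm_num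
  have hre : (s + δ).re = s.re + δ := by simp
  have hdiff := norm_riemannZeta_add_sub_le hs him hδ.le
  by_contra! hlt
  have hsmall : ‖riemannZeta (s + δ)‖ ≤ 6 * τ * δ := by
    have := norm_le_norm_sub_add (riemannZeta (s + δ)) (riemannZeta s)
    linarith
  have h341 := div_le_norm_riemannZeta_pow_four (s := s + δ) (by linarith)
    (by simpa using him)
  have hratio : 9 / 10 * δ ≤ ((s + δ).re - 1) / (s + δ).re := by
    rw [hre, le_div_iff₀ (by linarith)]
    nlinarith
  have : (9 / 10 * δ) ^ 3 / (3 * τ) ≤ (6 * τ * δ) ^ 4 :=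
    calc (9 / 10 * δ) ^ 3 / (3 * τ) ≤ (((s + δ).re - 1) / (s + δ).re) ^ 3 / (3 * τ) := by gcongr
      _ ≤ ‖riemannZeta (s + δ)‖ ^ 4 := by simpa using h341
      _ ≤ (6 * τ * δ) ^ 4 := by gcongr
  rw [div_le_iff₀ (by positivity),
    show (6 * τ * δ) ^ 4 * (3 * τ) = 3888 * (τ ^ 5 * δ) * δ ^ 3 by ring, hτδ] at this
  linarith [pow_pos hδ 3, this, mul_pow (9 / 10) δ 3]

end Zeta

section AbsCos

/-- The Fourier coefficients of `φ ↦ ‖1 + exp (φ * I)‖ = 2 * |cos (φ / 2)|`, see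
`hasSum_absCosCoeff_mul_cos`. -/
noncomputable def absCosCoeff (n : ℤ) : ℝ := 4 / Real.pi * ((-1) ^ n / (1 - 4 * (n : ℝ) ^ 2))

lemma summable_absCosCoeff : Summable absCosCoeff := by
  refine .of_norm_bounded_eventually (g := fun n : ℤ ↦ 4 / Real.pi * (1 / (n : ℝ) ^ 2))
    ((Real.summable_one_div_int_pow.mpr one_lt_two).mul_left _) ?_
  filter_upwards [(Set.finite_singleton (0 : ℤ)).compl_mem_cofinite] with n hn
  have hn1 : (1 : ℝ) ≤ (n : ℝ) ^ 2 := by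
    exact_mod_cast Int.add_one_le_iff.mpr (sq_pos_of_ne_zero (by simpa using hn))
  rw [absCosCoeff, norm_mul, norm_div ((-1) ^ n), norm_zpow, norm_neg, norm_one, one_zpow,
    Real.norm_of_nonneg (by positivity), Real.norm_eq_abs, abs_sub_comm,
    abs_of_nonneg (by linarith)]
  gcongr
  linarith

lemma norm_one_add_exp_mul_I {φ : ℝ} (hφ : |φ| ≤ Real.pi) :
    (‖1 + Complex.exp (φ * Complex.I)‖ : ℂ) =
      Complex.exp ((φ / 2 : ℝ) * Complex.I) + Complex.exp (-(φ / 2 : ℝ) * Complex.I) := by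
  obtain ⟨hl, hr⟩ := abs_le.mp hφ
  have hcos : 0 ≤ Real.cos (φ / 2) :=
    Real.cos_nonneg_of_neg_pi_div_two_le_of_le (by linarith) (by linarith)
  have hfactor : 1 + Complex.exp (φ * Complex.I) =
      Complex.exp ((φ / 2 : ℝ) * Complex.I) * (2 * Real.cos (φ / 2) : ℝ) := by
    push_cast
    rw [Complex.two_cos, mul_add, ← Complex.exp_add, ← Complex.exp_add]
    ring_nf
    rw [Complex.exp_zero, add_comm]
  rw [hfactor, norm_mul, Complex.norm_exp_ofReal_mul_I, one_mul, Complex.norm_real,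
    Real.norm_of_nonneg (by positivity)]
  push_cast
  exact Complex.two_cos _

lemma integral_exp_one_sub_two_mul (n : ℤ) :
    ∫ x in -(1 / 2 : ℝ)..1 / 2, Complex.exp ((Real.pi * (1 - 2 * n) * x : ℝ) * Complex.I) =
      2 * (-1) ^ n / (Real.pi * (1 - 2 * n)) := by
  have hodd : (1 - 2 * n : ℝ) ≠ 0 := by exact_mod_cast (by lia : 1 - 2 * n ≠ 0)
  have hsin : Real.sin (Real.pi * (1 - 2 * n) * (1 / 2)) = (-1) ^ n := by
    rw [show Real.pi * (1 - 2 * n) * (1 / 2) = Real.pi / 2 - n * Real.pi by ring,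
      Real.sin_sub_int_mul_pi, Real.sin_pi_div_two, mul_one]
  rw [intervalIntegral.integral_comp_mul_left (fun x : ℝ ↦ Complex.exp (x * Complex.I))
    (mul_ne_zero Real.pi_ne_zero hodd), mul_neg, integral_exp_mul_I_eq_sin, hsin,
    Complex.real_smul]
  push_cast
  ring

/-- The function `φ ↦ ‖1 + exp (φ * I)‖` on the circle, in the variable `φ / (2 * π)`. -/
noncomputable def absCosCircle : C(UnitAddCircle, ℂ) where
  toFun x := ‖1 + fourier 1 x‖
  continuous_toFun := by fun_prop

lemma fourierCoeff_absCosCircle (n : ℤ) : fourierCoeff absCosCircle n = absCosCoeff n := by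
  have hintegrand : ∀ x ∈ Set.uIcc (-(1 / 2 : ℝ)) (1 / 2),
      fourier (-n) (x : UnitAddCircle) • absCosCircle x =
        Complex.exp ((Real.pi * (1 - 2 * n) * x : ℝ) * Complex.I) +
          Complex.exp ((Real.pi * (1 - 2 * (n + 1 : ℤ)) * x : ℝ) * Complex.I) := fun x hx ↦ by
    rw [Set.uIcc_of_le (by norm_num)] at hx
    have hfourier : ∀ m : ℤ, fourier m (x : UnitAddCircle) =
        Complex.exp ((2 * Real.pi * m * x : ℝ) * Complex.I) := fun m ↦ by
      rw [fourier_coe_apply]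
      congr 1
      push_cast
      ring
    rw [show absCosCircle x = ‖1 + fourier 1 (x : UnitAddCircle)‖ from rfl, hfourier, hfourier,
      norm_one_add_exp_mul_I, smul_eq_mul, mul_add, ← Complex.exp_add, ← Complex.exp_add]
    · congr 2 <;> push_cast <;> ring
    · rw [abs_le]
      constructor <;> push_cast <;> nlinarith [hx.1, hx.2, Real.pi_pos]
  have hodd : (1 - 2 * n : ℂ) ≠ 0 := by exact_mod_cast (by lia : 1 - 2 * n ≠ 0)
  have hodd' : (1 + 2 * n : ℂ) ≠ 0 := by exact_mod_cast (by lia : 1 + 2 * n ≠ 0)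
  have hπ : (Real.pi : ℂ) ≠ 0 := by exact_mod_cast Real.pi_ne_zero
  rw [fourierCoeff_eq_intervalIntegral _ n (-(1 / 2)), show -(1 / 2 : ℝ) + 1 = 1 / 2 by norm_num,
    intervalIntegral.integral_congr hintegrand, intervalIntegral.integral_add
      (Continuous.intervalIntegrable (by fun_prop) _ _)
      (Continuous.intervalIntegrable (by fun_prop) _ _),
    integral_exp_one_sub_two_mul, integral_exp_one_sub_two_mul, absCosCoeff,
    zpow_add_one₀ (by norm_num)]
  push_cast
  rw [div_one, one_smul, show (1 - 2 * (n + 1) : ℂ) = -(1 + 2 * n) by ring,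
    show (1 - 4 * n ^ 2 : ℂ) = (1 - 2 * n) * (1 + 2 * n) by ring]
  field_simp
  ring

lemma hasSum_absCosCoeff_mul_cos (φ : ℝ) :
    HasSum (fun n : ℤ ↦ absCosCoeff n * Real.cos (n * φ)) ‖1 + Complex.exp (φ * Complex.I)‖ := by
  have hfourier : ∀ n : ℤ, fourier n ((φ / (2 * Real.pi) : ℝ) : UnitAddCircle) =
      Complex.exp ((n * φ : ℝ) * Complex.I) := fun n ↦ by
    rw [fourier_coe_apply]
    congr 1
    push_cast
    field_simp
  have hvalue : absCosCircle ((φ / (2 * Real.pi) : ℝ) : UnitAddCircle) =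
      (‖1 + Complex.exp (φ * Complex.I)‖ : ℂ) := by
    rw [show absCosCircle _ = (‖1 + fourier 1 ((φ / (2 * Real.pi) : ℝ) : UnitAddCircle)‖ : ℂ)
      from rfl, hfourier, Int.cast_one, one_mul]
  have hsummable : Summable (fourierCoeff absCosCircle) := by
    simpa only [funext fourierCoeff_absCosCircle] using
      Complex.summable_ofReal.mpr summable_absCosCoeff
  have hseries := Complex.hasSum_re
    (has_pointwise_sum_fourier_series_of_summable hsummable (φ / (2 * Real.pi) : ℝ))
  simpa only [fourierCoeff_absCosCircle, hfourier, hvalue, smul_eq_mul, Complex.re_ofReal_mul,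
    Complex.exp_ofReal_mul_I_re, Complex.ofReal_re] using hseries

lemma tsum_absCosCoeff : ∑' n, absCosCoeff n = 2 := by
  have h := (hasSum_absCosCoeff_mul_cos 0).tsum_eq
  simpa [one_add_one_eq_two] using h

end AbsCos

section PrimeSums

lemma abs_log_norm_one_sub_le {z : ℂ} (hz : ‖z‖ ≤ 1 / 2) :
    |Real.log ‖1 - z‖| ≤ 3 / 2 * ‖z‖ := by
  rw [← Complex.log_re, sub_eq_add_neg, ← norm_neg z]
  exact (Complex.abs_re_le_norm _).trans
    (Complex.norm_log_one_add_half_le_self (by rwa [norm_neg]))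

lemma norm_ofReal_mul_exp_mul_I {q : ℝ} (hq : 0 ≤ q) (φ : ℝ) :
    ‖(q : ℂ) * Complex.exp (φ * Complex.I)‖ = q := by
  rw [norm_mul, Complex.norm_real, Complex.norm_exp_ofReal_mul_I, mul_one, Real.norm_of_nonneg hq]

lemma hasSum_pow_div_mul_cos {q : ℝ} (hq : 0 ≤ q) (hq1 : q < 1) (φ : ℝ) :
    HasSum (fun m : ℕ ↦ q ^ m / m * Real.cos (m * φ))
      (-Real.log ‖1 - (q : ℂ) * Complex.exp (φ * Complex.I)‖) := by
  have hlog := Complex.hasSum_re (Complex.hasSum_taylorSeries_neg_log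
    (z := (q : ℂ) * Complex.exp (φ * Complex.I)) (by rwa [norm_ofReal_mul_exp_mul_I hq]))
  rw [Complex.neg_re, Complex.log_re] at hlog
  refine hlog.congr_fun fun m ↦ ?_
  have hterm : ((q : ℂ) * Complex.exp (φ * Complex.I)) ^ m / m =
      (q ^ m / m : ℝ) * Complex.exp ((m * φ : ℝ) * Complex.I) := by
    rw [mul_pow, ← Complex.exp_nat_mul, mul_div_right_comm]
    push_cast
    rw [mul_assoc (m : ℂ)]
  rw [hterm, Complex.re_ofReal_mul, Complex.exp_ofReal_mul_I_re]

lemma norm_one_add_exp_mul_le_tsum {q : ℝ} (hq : 0 ≤ q) (hq1 : q < 1) (φ : ℝ) :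
    ‖1 + Complex.exp (φ * Complex.I)‖ * q ≤
      ∑' n : ℤ, absCosCoeff n *
        (-Real.log ‖1 - (q : ℂ) * Complex.exp ((n * φ : ℝ) * Complex.I)‖) := by
  let G : ℕ → ℤ → ℝ := fun m n ↦ q ^ m / m * (absCosCoeff n * Real.cos (n * (m * φ)))
  have hG : Summable (Function.uncurry G) := by
    refine .of_norm_bounded ((summable_geometric_of_lt_one hq hq1).mul_of_nonneg
      summable_absCosCoeff.abs (fun m ↦ by positivity) fun n ↦ abs_nonneg _) fun ⟨m, n⟩ ↦ ?_
    simp only [Function.uncurry, G]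
    rw [norm_mul, norm_mul, Real.norm_of_nonneg (by positivity), Real.norm_eq_abs, Real.norm_eq_abs]
    gcongr
    · obtain rfl | hm := m.eq_zero_or_pos
      · simp
      · exact div_le_self (by positivity) (by exact_mod_cast hm)
    · exact mul_le_of_le_one_right (abs_nonneg _) (Real.abs_cos_le_one _)
  have hcol : ∀ n : ℤ, ∑' m, G m n = absCosCoeff n *
      (-Real.log ‖1 - (q : ℂ) * Complex.exp ((n * φ : ℝ) * Complex.I)‖) := fun n ↦ by
    rw [← ((hasSum_pow_div_mul_cos hq hq1 (n * φ)).mul_left (absCosCoeff n)).tsum_eq]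
    exact tsum_congr fun m ↦ by simp only [G]; rw [mul_left_comm (n : ℝ)]; ring
  have hrow : ∀ m : ℕ, ∑' n, G m n = q ^ m / m * ‖1 + Complex.exp ((m * φ : ℝ) * Complex.I)‖ :=
    fun m ↦ ((hasSum_absCosCoeff_mul_cos (m * φ)).mul_left _).tsum_eq
  have hsum : Summable fun m : ℕ ↦ ∑' n, G m n := hG.prod
  calc ‖1 + Complex.exp (φ * Complex.I)‖ * q = ∑' n, G 1 n := by simp [hrow, mul_comm]
    _ ≤ ∑' m, ∑' n, G m n := hsum.le_tsum 1 fun m _ ↦ by rw [hrow]; positivity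
    _ = ∑' n, ∑' m, G m n := hG.tsum_comm.symm
    _ = _ := tsum_congr hcol

lemma rpow_neg_one_add_le_half {p : ℕ} (hp : p.Prime) {ε : ℝ} (hε : 0 ≤ ε) :
    (p : ℝ) ^ (-(1 + ε)) ≤ 1 / 2 := by
  have hp2 : (2 : ℝ) ≤ p := by exact_mod_cast hp.two_le
  calc (p : ℝ) ^ (-(1 + ε)) ≤ (p : ℝ) ^ (-1 : ℝ) :=
        Real.rpow_le_rpow_of_exponent_le (by linarith) (by linarith)
    _ ≤ 1 / 2 := by
        rw [Real.rpow_neg_one, one_div]; exact inv_anti₀ two_pos hp2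

lemma natCast_cpow_mul_I {n : ℕ} (hn : n ≠ 0) (θ : ℝ) :
    (n : ℂ) ^ (θ * Complex.I) = Complex.exp ((θ * Real.log n : ℝ) * Complex.I) := by
  rw [Complex.cpow_def_of_ne_zero (by exact_mod_cast hn), ← Complex.natCast_log]
  push_cast
  ring_nf

lemma natCast_cpow_neg_one_add_sub {n : ℕ} (hn : n ≠ 0) (ε τ : ℝ) :
    (n : ℂ) ^ (-(1 + ε - τ * Complex.I)) =
      ((n : ℝ) ^ (-(1 + ε)) : ℝ) * Complex.exp ((τ * Real.log n : ℝ) * Complex.I) := by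
  rw [neg_sub, sub_eq_neg_add, Complex.cpow_add _ _ (by exact_mod_cast hn), natCast_cpow_mul_I hn,
    Complex.ofReal_cpow n.cast_nonneg]
  push_cast
  rfl

lemma hasSum_log_norm_riemannZeta {s : ℂ} (hs : 1 < s.re) :
    HasSum (fun p : Nat.Primes ↦ -Real.log ‖1 - (p : ℂ) ^ (-s)‖) (Real.log ‖riemannZeta s‖) := by
  have hsum : Summable fun p : Nat.Primes ↦ -Complex.log (1 - (p : ℂ) ^ (-s)) := by
    simpa only [MulChar.one_apply (isUnit_of_subsingleton _), one_mul] using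
      DirichletCharacter.summable_neg_log_one_sub_mul_prime_cpow (1 : DirichletCharacter ℂ 1) hs
  rw [← riemannZeta_eulerProduct_exp_log hs, Complex.norm_exp, Real.log_exp]
  simpa only [Complex.neg_re, Complex.log_re] using Complex.hasSum_re hsum.hasSum

lemma summable_absCosCoeff_mul_log_prime {ε : ℝ} (hε : 0 < ε) (θ : ℝ) :
    Summable fun x : Nat.Primes × ℤ ↦ absCosCoeff x.2 *
      (-Real.log ‖1 - ((x.1 : ℕ) : ℂ) ^ (-(1 + ε - (x.2 * θ : ℝ) * Complex.I : ℂ))‖) := by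
  have hp : Summable fun p : Nat.Primes ↦ 3 / 2 * ((p : ℕ) : ℝ) ^ (-(1 + ε)) :=
    (Nat.Primes.summable_rpow.mpr (by linarith)).mul_left _
  refine .of_norm_bounded (hp.mul_of_nonneg summable_absCosCoeff.abs (fun p ↦ by positivity)
    fun n ↦ abs_nonneg _) fun ⟨p, n⟩ ↦ ?_
  have hnorm := norm_ofReal_mul_exp_mul_I (q := ((p : ℕ) : ℝ) ^ (-(1 + ε))) (by positivity)
    (n * θ * Real.log p)
  simp only [natCast_cpow_neg_one_add_sub p.2.ne_zero]
  rw [norm_mul, norm_neg, Real.norm_eq_abs, Real.norm_eq_abs, mul_comm]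
  gcongr
  refine (abs_log_norm_one_sub_le ?_).trans_eq (by rw [hnorm])
  rw [hnorm]
  exact rpow_neg_one_add_le_half p.2 hε.le

lemma hasSum_primes_absCosCoeff_mul_log {ε : ℝ} (hε : 0 < ε) (θ : ℝ) (n : ℤ) :
    HasSum (fun p : Nat.Primes ↦ absCosCoeff n *
        (-Real.log ‖1 - (p : ℂ) ^ (-(1 + ε - (n * θ : ℝ) * Complex.I : ℂ))‖))
      (absCosCoeff n * Real.log ‖riemannZeta (1 + ε - (n * θ : ℝ) * Complex.I)‖) :=
  (hasSum_log_norm_riemannZeta (by simpa using hε)).mul_left _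

lemma summable_absCosCoeff_mul_log_riemannZeta {ε : ℝ} (hε : 0 < ε) (θ : ℝ) :
    Summable fun n : ℤ ↦ absCosCoeff n *
      Real.log ‖riemannZeta (1 + ε - (n * θ : ℝ) * Complex.I)‖ := by
  refine (summable_absCosCoeff_mul_log_prime hε θ).prod_symm.prod.congr fun n ↦ ?_
  exact (hasSum_primes_absCosCoeff_mul_log hε θ n).tsum_eq

lemma sum_primes_norm_one_add_cpow_le_tsum (N : ℕ) {ε : ℝ} (hε : 0 < ε) (θ : ℝ) :
    ∑ p ∈ N.primesBelow, ‖1 + (p : ℂ) ^ (θ * Complex.I)‖ * (p : ℝ) ^ (-(1 + ε)) ≤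
      ∑' n : ℤ, absCosCoeff n * Real.log ‖riemannZeta (1 + ε - (n * θ : ℝ) * Complex.I)‖ := by
  let S : Finset Nat.Primes := N.primesBelow.subtype Nat.Prime
  let G : Nat.Primes → ℤ → ℝ := fun p n ↦ absCosCoeff n *
    (-Real.log ‖1 - (p : ℂ) ^ (-(1 + ε - (n * θ : ℝ) * Complex.I : ℂ))‖)
  have hG : Summable (Function.uncurry G) := summable_absCosCoeff_mul_log_prime hε θ
  have hrow : Summable fun p ↦ ∑' n, G p n := hG.prod
  have hprime : ∀ p : Nat.Primes,
      ‖1 + (p : ℂ) ^ (θ * Complex.I)‖ * (p : ℝ) ^ (-(1 + ε)) ≤ ∑' n, G p n := fun p ↦ by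
    simp only [G, natCast_cpow_neg_one_add_sub p.2.ne_zero, natCast_cpow_mul_I p.2.ne_zero,
      mul_assoc]
    exact norm_one_add_exp_mul_le_tsum (by positivity)
      ((rpow_neg_one_add_le_half p.2 hε.le).trans_lt one_half_lt_one) _
  calc _ = ∑ p ∈ S, ‖1 + (p : ℂ) ^ (θ * Complex.I)‖ * (p : ℝ) ^ (-(1 + ε)) :=
        (Finset.sum_subtype_of_mem
          (fun p : ℕ ↦ ‖1 + (p : ℂ) ^ (θ * Complex.I)‖ * (p : ℝ) ^ (-(1 + ε)))
          fun p ↦ Nat.prime_of_mem_primesBelow).symm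
    _ ≤ ∑ p ∈ S, ∑' n, G p n := Finset.sum_le_sum fun p _ ↦ hprime p
    _ ≤ ∑' p, ∑' n, G p n := hrow.sum_le_tsum S fun p _ ↦ le_trans (by positivity) (hprime p)
    _ = ∑' n, ∑' p, G p n := hG.tsum_comm.symm
    _ = _ := tsum_congr fun n ↦ (hasSum_primes_absCosCoeff_mul_log hε θ n).tsum_eq

lemma mul_norm_riemannZeta_le {s : ℂ} (hs : 1 < s.re) {θ k : ℝ} (hθ : 0 < θ) (hθ' : θ ≤ 1 / 2)
    (hk : 1 ≤ k) (him : |s.im| = k * θ) : θ * ‖riemannZeta s‖ ≤ 13 / 8 * k := by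
  have hk0 : 0 < k := by linarith
  have hpole : k * θ ≤ ‖s - 1‖ := by simpa [him] using Complex.abs_im_le_norm (s - 1)
  calc θ * ‖riemannZeta s‖ ≤ θ * (1 / (k * θ) + 1 + k * θ / 2) := by
        gcongr
        refine (norm_riemannZeta_le hs).trans ?_
        rw [him]
        gcongr
    _ = 1 / k + θ + k * θ ^ 2 / 2 := by field_simp
    _ ≤ 1 + 1 / 2 + k * (1 / 2) ^ 2 / 2 := by
        gcongr
        exact (div_le_one hk0).mpr hk
    _ ≤ 13 / 8 * k := by linarith

lemma inv_le_mul_norm_riemannZeta {s : ℂ} (hs : 1 < s.re) (hs' : s.re ≤ 101 / 100) {θ k : ℝ}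
    (hθ : s.re - 1 ≤ θ) (hθ' : θ ≤ 1 / 2) (hk : 1 ≤ k) (him : |s.im| = k * θ) :
    ((4 * k) ^ 4)⁻¹ ≤ θ * ‖riemannZeta s‖ := by
  have hθ0 : 0 < θ := by linarith
  have hk4 : k ≤ k ^ 4 := le_self_pow₀ hk (by norm_num)
  obtain him1 | him1 := le_total |s.im| 1
  · have hpole : ‖s - 1‖ ≤ θ * (1 + k) := by
      refine (Complex.norm_le_abs_re_add_abs_im _).trans ?_
      simp only [Complex.sub_re, Complex.sub_im, Complex.one_re, Complex.one_im, sub_zero, him]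
      rw [abs_of_pos (sub_pos.mpr hs)]
      linarith
    have hnear := one_fifth_le_norm_sub_one_mul_riemannZeta hs hs' him1
    rw [norm_mul] at hnear
    have hlower : 1 / 5 ≤ θ * ‖riemannZeta s‖ * (1 + k) :=
      hnear.trans ((mul_le_mul_of_nonneg_right hpole (norm_nonneg _)).trans_eq (by ring))
    rw [inv_le_iff_one_le_mul₀ (by positivity)]
    calc 1 ≤ θ * ‖riemannZeta s‖ * (1 + k) * 5 := by linarith
      _ = θ * ‖riemannZeta s‖ * (5 * (1 + k)) := by ring
      _ ≤ θ * ‖riemannZeta s‖ * (4 * k) ^ 4 := by gcongr; linarith [mul_pow 4 k 4]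
  · have hθ3 : θ ^ 3 ≤ (1 / 2) ^ 3 := by gcongr
    calc ((4 * k) ^ 4)⁻¹ ≤ (2000 * k ^ 4 * θ ^ 3)⁻¹ := by
          gcongr
          nlinarith [mul_pow 4 k 4, mul_le_mul_of_nonneg_left hθ3 (by positivity : 0 ≤ k ^ 4)]
      _ = θ * (1 / (2000 * |s.im| ^ 4)) := by rw [him]; field_simp
      _ ≤ θ * ‖riemannZeta s‖ := by gcongr; exact le_norm_riemannZeta hs him1

lemma absCosCoeff_of_odd {n : ℤ} (hn : Odd n) :
    absCosCoeff n = 4 / Real.pi / (4 * |(n : ℝ)| ^ 2 - 1) := by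
  rw [absCosCoeff, hn.neg_one_zpow, sq_abs, ← neg_sub, neg_div_neg_eq, mul_one_div]

lemma absCosCoeff_of_even {n : ℤ} (hn : Even n) :
    absCosCoeff n = -(4 / Real.pi / (4 * |(n : ℝ)| ^ 2 - 1)) := by
  rw [absCosCoeff, hn.neg_one_zpow, sq_abs, ← neg_sub, div_neg, mul_neg, mul_one_div]

section

variable {ε θ : ℝ} {n : ℤ}

lemma one_le_abs_intCast (hn : n ≠ 0) : (1 : ℝ) ≤ |(n : ℝ)| := by
  exact_mod_cast Int.one_le_abs hn

lemma one_lt_re_one_add_sub (hε : 0 < ε) (τ : ℝ) : 1 < (1 + ε - τ * Complex.I : ℂ).re := by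
  simpa using hε

lemma abs_im_one_add_sub (hθ : 0 < θ) (n : ℤ) :
    |(1 + ε - (n * θ : ℝ) * Complex.I : ℂ).im| = |(n : ℝ)| * θ := by
  simp [abs_mul, abs_of_pos hθ]

lemma absCosCoeff_mul_log_le_of_odd (hε : 0 < ε) (hθ : 0 < θ) (hθ' : θ ≤ 1 / 2) (hn : Odd n) :
    absCosCoeff n * Real.log (θ * ‖riemannZeta (1 + ε - (n * θ : ℝ) * Complex.I)‖) ≤
      4 / Real.pi * ((5 / 8 + Real.log |(n : ℝ)|) / (4 * |(n : ℝ)| ^ 2 - 1)) := by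
  have hn1 := one_le_abs_intCast (n := n) (by rintro rfl; simp at hn)
  have hs := one_lt_re_one_add_sub hε (n * θ)
  have hζ := norm_pos_iff.mpr (riemannZeta_ne_zero_of_one_lt_re hs)
  have hlog : Real.log (θ * ‖riemannZeta (1 + ε - (n * θ : ℝ) * Complex.I)‖) ≤
      5 / 8 + Real.log |(n : ℝ)| :=
    calc _ ≤ Real.log (13 / 8 * |(n : ℝ)|) := Real.log_le_log (by positivity)
          (mul_norm_riemannZeta_le hs hθ hθ' hn1 (abs_im_one_add_sub hθ n))
      _ = Real.log (13 / 8) + Real.log |(n : ℝ)| :=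
          Real.log_mul (by norm_num) (by positivity)
      _ ≤ 5 / 8 + Real.log |(n : ℝ)| := by
          linarith [Real.log_le_sub_one_of_pos (by norm_num : (0 : ℝ) < 13 / 8)]
  have : 0 < 4 * |(n : ℝ)| ^ 2 - 1 := by nlinarith
  rw [absCosCoeff_of_odd hn, div_mul_eq_mul_div, mul_div_assoc]
  gcongr

/- The coefficients of even index are negative, so here `ζ` must be bounded from below. -/
lemma absCosCoeff_mul_log_le_of_even (hε : 0 < ε) (hε' : ε ≤ 1 / 100) (hεθ : ε ≤ θ)
    (hθ : θ ≤ 1 / 2) (hn : Even n) (hn0 : n ≠ 0) :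
    absCosCoeff n * Real.log (θ * ‖riemannZeta (1 + ε - (n * θ : ℝ) * Complex.I)‖) ≤
      4 / Real.pi * ((8 * Real.log 2 + 4 * Real.log |(n : ℝ)|) / (4 * |(n : ℝ)| ^ 2 - 1)) := by
  have hn1 := one_le_abs_intCast hn0
  have hre : (1 + ε - (n * θ : ℝ) * Complex.I : ℂ).re = 1 + ε := by simp
  have hlower := inv_le_mul_norm_riemannZeta (one_lt_re_one_add_sub hε (n * θ)) (by linarith)
    (by linarith) hθ hn1 (abs_im_one_add_sub (hε.trans_le hεθ) n)
  have hlog : -(8 * Real.log 2 + 4 * Real.log |(n : ℝ)|) ≤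
      Real.log (θ * ‖riemannZeta (1 + ε - (n * θ : ℝ) * Complex.I)‖) := by
    refine le_trans (le_of_eq ?_) (Real.log_le_log (by positivity) hlower)
    rw [Real.log_inv, Real.log_pow, Real.log_mul (by norm_num) (by positivity),
      show (4 : ℝ) = 2 ^ 2 by norm_num, Real.log_pow]
    push_cast
    ring
  have : 0 < 4 * |(n : ℝ)| ^ 2 - 1 := by nlinarith
  rw [absCosCoeff_of_even hn, neg_mul_comm, div_mul_eq_mul_div, mul_div_assoc]
  gcongr
  linarith

end

lemma add_mul_log_div_le_sub {A B x : ℝ} (hA : 0 ≤ A) (hB : 0 ≤ B) (hx : 1 < x) :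
    (A + B * Real.log x) / (4 * x ^ 2 - 1) ≤
      (A + B + B * Real.log x) / (8 * (x - 1)) -
        (A + B + B * Real.log (x + 2)) / (8 * (x + 2 - 1)) := by
  have hx1 : 0 < x - 1 := by linarith
  have hlog : Real.log (x + 2) ≤ Real.log x + 2 / x := by
    rw [show x + 2 = x * (1 + 2 / x) by field_simp, Real.log_mul (by positivity) (by positivity)]
    linarith [Real.log_le_sub_one_of_pos (by positivity : 0 < 1 + 2 / x)]
  have hlog0 : 0 ≤ Real.log x := Real.log_nonneg hx.le
  calc (A + B * Real.log x) / (4 * x ^ 2 - 1)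
      ≤ (A + B * Real.log x) / (4 * (x ^ 2 - 1)) := by
        gcongr <;> nlinarith
    _ ≤ (A + B * Real.log x + B / x) / (4 * (x ^ 2 - 1)) := by
        have : 0 < x ^ 2 - 1 := by nlinarith
        exact div_le_div_of_nonneg_right (le_add_of_nonneg_right (by positivity)) (by linarith)
    _ = (A + B + B * Real.log x) / (8 * (x - 1)) -
          (A + B + B * (Real.log x + 2 / x)) / (8 * (x + 2 - 1)) := by
        rw [show x ^ 2 - 1 = (x - 1) * (x + 1) by ring, show x + 2 - 1 = x + 1 by ring]
        field_simp
        ring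
    _ ≤ _ := by
        have : 0 < x + 2 - 1 := by linarith
        gcongr

lemma tsum_le_of_le_add_mul_log_div {g : ℕ → ℝ} (hg : Summable g) {A B x : ℝ} (hA : 0 ≤ A)
    (hB : 0 ≤ B) (hx : 1 ≤ x)
    (h : ∀ j : ℕ, g j ≤ (A + B * Real.log (x + 2 * j)) / (4 * (x + 2 * j) ^ 2 - 1)) :
    ∑' j, g j ≤ (A + B * Real.log x) / (4 * x ^ 2 - 1) +
      (A + B + B * Real.log (x + 2)) / (8 * (x + 1)) := by
  let T : ℕ → ℝ := fun j ↦
    (A + B + B * Real.log (x + 2 * (j + 1))) / (8 * (x + 2 * (j + 1) - 1))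
  have hT : ∀ j, 0 ≤ T j := fun j ↦ by
    have hj : 0 ≤ x + 2 * (j + 1) - 1 := by linarith [j.cast_nonneg (α := ℝ)]
    have hlog : 0 ≤ Real.log (x + 2 * (j + 1)) := Real.log_nonneg (by linarith)
    positivity
  have hstep : ∀ j, g (j + 1) ≤ T j - T (j + 1) := fun j ↦ by
    have hj := add_mul_log_div_le_sub hA hB
      (by linarith [j.cast_nonneg (α := ℝ)] : 1 < x + 2 * (j + 1))
    refine ((h (j + 1)).trans (by simpa using hj)).trans_eq ?_
    simp only [T]
    push_cast
    ring_nf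
  have htail : ∑' j, g (j + 1) ≤ T 0 :=
    ((summable_nat_add_iff 1).mpr hg).tsum_le_of_sum_range_le fun n ↦
      calc ∑ j ∈ Finset.range n, g (j + 1) ≤ ∑ j ∈ Finset.range n, (T j - T (j + 1)) :=
            Finset.sum_le_sum fun j _ ↦ hstep j
        _ = T 0 - T n := Finset.sum_range_sub' T n
        _ ≤ T 0 := sub_le_self _ (hT n)
  have h0 : g 0 ≤ (A + B * Real.log x) / (4 * x ^ 2 - 1) := by simpa using h 0
  have hT0 : T 0 = (A + B + B * Real.log (x + 2)) / (8 * (x + 1)) := by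
    simp only [T, Nat.cast_zero, zero_add, mul_one]
    congr 2
    ring
  rw [hg.tsum_eq_zero_add, ← hT0]
  exact add_le_add h0 htail

lemma tsum_int_le_of_le_add_mul_log_div {F : ℤ → ℝ} (hF : Summable F) {A B C D : ℝ}
    (hA : 0 ≤ A) (hB : 0 ≤ B) (hC : 0 ≤ C) (hD : 0 ≤ D)
    (hodd : ∀ n : ℤ, Odd n → F n ≤ (A + B * Real.log |(n : ℝ)|) / (4 * |(n : ℝ)| ^ 2 - 1))
    (heven : ∀ n : ℤ, Even n → n ≠ 0 →
      F n ≤ (C + D * Real.log |(n : ℝ)|) / (4 * |(n : ℝ)| ^ 2 - 1)) :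
    ∑' n, F n ≤ F 0 + (2 * A / 3 + (A + B + B * Real.log 3) / 8 +
      (2 * (C + D * Real.log 2) / 15 + (C + D + D * Real.log 4) / 12)) := by
  let g : ℕ → ℝ := fun k ↦ F k + F (-k)
  have hg : HasSum g (∑' n, F n + F 0) := hF.hasSum.nat_add_neg
  have hg_sub : ∀ {f : ℕ → ℕ}, f.Injective → Summable fun j ↦ g (f j) :=
    hg.summable.comp_injective
  have hg_even : Summable fun j ↦ g (2 * j) := hg_sub fun i j h ↦ by lia
  have hpair : ∀ {a b : ℝ} (k : ℕ),
      (∀ n : ℤ, |n| = k → F n ≤ (a + b * Real.log |(n : ℝ)|) / (4 * |(n : ℝ)| ^ 2 - 1)) →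
      g k ≤ (2 * a + 2 * b * Real.log k) / (4 * (k : ℝ) ^ 2 - 1) := fun k h ↦ by
    have hsum := add_le_add (h k (by simp)) (h (-k) (by simp))
    push_cast at hsum
    rw [abs_neg, Nat.abs_cast] at hsum
    exact hsum.trans_eq (by ring)
  have hodd_sum : ∑' j, g (2 * j + 1) ≤ 2 * A / 3 + (A + B + B * Real.log 3) / 8 := by
    refine (tsum_le_of_le_add_mul_log_div (hg_sub fun i j h ↦ by lia) (A := 2 * A) (B := 2 * B)
      (x := 1) (by positivity) (by positivity) le_rfl fun j ↦ ?_).trans_eq ?_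
    · have := hpair (2 * j + 1) fun n hn ↦ hodd n (by rw [← odd_abs, hn]; simp)
      push_cast at this
      rwa [add_comm (1 : ℝ)]
    · norm_num; ring
  have heven_sum : ∑' j, g (2 * (j + 1)) ≤
      2 * (C + D * Real.log 2) / 15 + (C + D + D * Real.log 4) / 12 := by
    refine (tsum_le_of_le_add_mul_log_div (hg_sub fun i j h ↦ by lia) (A := 2 * C) (B := 2 * D)
      (x := 2) (by positivity) (by positivity) one_le_two fun j ↦ ?_).trans_eq ?_
    · have := hpair (2 * (j + 1)) fun n hn ↦
        heven n (by rw [← even_abs, hn]; simp) (by rintro rfl; simp at hn; lia)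
      push_cast at this
      rwa [show (2 : ℝ) * (j + 1) = 2 + 2 * j by ring] at this
    · norm_num; ring
  have htotal := tsum_even_add_odd hg_even (hg_sub fun i j h ↦ by lia)
  have hg0 : g (2 * 0) = 2 * F 0 := by simp [g, two_mul]
  rw [hg.tsum_eq, hg_even.tsum_eq_zero_add, hg0] at htotal
  linarith

lemma absCosCoeff_zero : absCosCoeff 0 = 4 / Real.pi := by
  simp [absCosCoeff]

lemma hasSum_absCosCoeff_mul_log_mul_riemannZeta {ε θ : ℝ} (hε : 0 < ε) (hθ : 0 < θ) :
    HasSum (fun n : ℤ ↦ absCosCoeff n *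
        Real.log (θ * ‖riemannZeta (1 + ε - (n * θ : ℝ) * Complex.I)‖))
      (2 * Real.log θ +
        ∑' n : ℤ, absCosCoeff n * Real.log ‖riemannZeta (1 + ε - (n * θ : ℝ) * Complex.I)‖) := by
  have hθsum : HasSum (fun n : ℤ ↦ absCosCoeff n * Real.log θ) (2 * Real.log θ) :=
    tsum_absCosCoeff ▸ summable_absCosCoeff.hasSum.mul_right _
  refine (hθsum.add (summable_absCosCoeff_mul_log_riemannZeta hε θ).hasSum).congr_fun fun n ↦ ?_
  have hζ := riemannZeta_ne_zero_of_one_lt_re (one_lt_re_one_add_sub hε (n * θ))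
  rw [Real.log_mul hθ.ne' (norm_ne_zero_iff.mpr hζ), mul_add]

lemma log_mul_norm_riemannZeta_one_add_le {ε θ : ℝ} (hε : 0 < ε) (hθ : 0 < θ) :
    Real.log (θ * ‖riemannZeta (1 + ε)‖) ≤ Real.log θ + Real.log (1 + 1 / ε) := by
  have hs : 1 < (1 + ε : ℂ).re := by simpa using hε
  have hζ := norm_pos_iff.mpr (riemannZeta_ne_zero_of_one_lt_re hs)
  have hbound : ‖riemannZeta (1 + ε)‖ ≤ 1 + 1 / ε := by
    simpa [abs_of_pos hε, add_comm] using norm_riemannZeta_le hs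
  rw [Real.log_mul hθ.ne' hζ.ne']
  gcongr

lemma tsum_absCosCoeff_mul_log_mul_riemannZeta_le {ε θ : ℝ} (hε : 0 < ε) (hε' : ε ≤ 1 / 100)
    (hεθ : ε ≤ θ) (hθ : θ ≤ 1 / 2) :
    ∑' n : ℤ, absCosCoeff n * Real.log (θ * ‖riemannZeta (1 + ε - (n * θ : ℝ) * Complex.I)‖) ≤
      4 / Real.pi * (Real.log θ + Real.log (1 + 1 / ε)) + 4 := by
  have hθ0 := hε.trans_le hεθ
  have hlog2 := Real.log_two_lt_d9
  have hlog3 : Real.log 3 ≤ Real.log 2 + 1 / 2 := by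
    rw [show (3 : ℝ) = 2 * (3 / 2) by norm_num, Real.log_mul (by norm_num) (by norm_num)]
    linarith [Real.log_le_sub_one_of_pos (by norm_num : (0 : ℝ) < 3 / 2)]
  have hlog4 : Real.log 4 = 2 * Real.log 2 := by
    rw [show (4 : ℝ) = 2 ^ 2 by norm_num, Real.log_pow, Nat.cast_ofNat]
  have hπ : 4 / Real.pi ≤ 4 / 3.14 := by gcongr; exact Real.pi_gt_d2.le
  have hbound := tsum_int_le_of_le_add_mul_log_div
    (hasSum_absCosCoeff_mul_log_mul_riemannZeta hε hθ0).summable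
    (A := 4 / Real.pi * (5 / 8)) (B := 4 / Real.pi) (C := 4 / Real.pi * (8 * Real.log 2))
    (D := 4 / Real.pi * 4) (by positivity) (by positivity) (by positivity) (by positivity)
    (fun n hn ↦ (absCosCoeff_mul_log_le_of_odd hε hθ0 hθ hn).trans_eq (by ring))
    (fun n hn hn0 ↦ (absCosCoeff_mul_log_le_of_even hε hε' hεθ hθ hn hn0).trans_eq (by ring))
  have hzero : absCosCoeff 0 * Real.log (θ * ‖riemannZeta (1 + ε - ((0 : ℤ) * θ : ℝ) * Complex.I)‖)
      ≤ 4 / Real.pi * (Real.log θ + Real.log (1 + 1 / ε)) := by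
    rw [absCosCoeff_zero, Int.cast_zero, zero_mul, Complex.ofReal_zero, zero_mul, sub_zero]
    gcongr
    exact log_mul_norm_riemannZeta_one_add_le hε hθ0
  refine hbound.trans (add_le_add hzero ?_)
  rw [hlog4]
  calc _ = 4 / Real.pi * (5 / 12 + (13 / 8 + Real.log 3) / 8 + 24 * Real.log 2 / 15 +
          (16 * Real.log 2 + 4) / 12) := by ring
    _ ≤ 4 / 3.14 * (5 / 12 + (13 / 8 + (Real.log 2 + 1 / 2)) / 8 + 24 * Real.log 2 / 15 +
          (16 * Real.log 2 + 4) / 12) := by gcongr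
    _ ≤ 4 := by norm_num1; linarith

lemma sum_primes_norm_one_add_cpow_le_two_mul_log (N : ℕ) {ε : ℝ} (hε : 0 < ε) (θ : ℝ) :
    ∑ p ∈ N.primesBelow, ‖1 + (p : ℂ) ^ (θ * Complex.I)‖ * (p : ℝ) ^ (-(1 + ε)) ≤
      2 * Real.log (1 + 1 / ε) := by
  have hzero := sum_primes_norm_one_add_cpow_le_tsum N hε 0
  simp only [mul_zero, Complex.ofReal_zero, zero_mul, sub_zero, Complex.cpow_zero] at hzero
  rw [tsum_mul_right, tsum_absCosCoeff] at hzero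
  have hζ : Real.log ‖riemannZeta (1 + ε)‖ ≤ Real.log (1 + 1 / ε) := by
    simpa using log_mul_norm_riemannZeta_one_add_le hε one_pos
  calc _ ≤ ∑ p ∈ N.primesBelow, ‖(1 + 1 : ℂ)‖ * (p : ℝ) ^ (-(1 + ε)) :=
        Finset.sum_le_sum fun p hp ↦ by
          have hp0 := (Nat.prime_of_mem_primesBelow hp).ne_zero
          gcongr
          refine (norm_add_le _ _).trans_eq ?_
          rw [natCast_cpow_mul_I hp0, Complex.norm_exp_ofReal_mul_I]
          norm_num
    _ ≤ 2 * Real.log (1 + 1 / ε) := hzero.trans (by gcongr)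

lemma sum_primes_norm_one_add_cpow_le (N : ℕ) {ε θ : ℝ} (hε : 0 < ε) (hε' : ε ≤ 1 / 100)
    (hθ : 0 < θ) (hθ' : θ ≤ 1 / 2) :
    ∑ p ∈ N.primesBelow, ‖1 + (p : ℂ) ^ (θ * Complex.I)‖ * (p : ℝ) ^ (-(1 + ε)) ≤
      4 / Real.pi * Real.log (1 + 1 / ε) - (2 - 4 / Real.pi) * Real.log θ + 4 := by
  obtain hεθ | hθε := le_total ε θ
  · have hsplit := (hasSum_absCosCoeff_mul_log_mul_riemannZeta hε hθ).tsum_eq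
    linarith [sum_primes_norm_one_add_cpow_le_tsum N hε θ,
      tsum_absCosCoeff_mul_log_mul_riemannZeta_le hε hε' hεθ hθ']
  · have hπ : 4 / Real.pi ≤ 2 := by
      rw [div_le_iff₀ Real.pi_pos]
      linarith [Real.two_le_pi]
    have hlog : Real.log θ + Real.log (1 + 1 / ε) ≤ 1 / 2 := by
      rw [← Real.log_mul (by positivity) (by positivity)]
      have hratio : θ * (1 / ε) ≤ 1 := by rwa [mul_one_div, div_le_one hε]
      linarith [Real.log_le_sub_one_of_pos (by positivity : 0 < θ * (1 + 1 / ε))]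
    refine (sum_primes_norm_one_add_cpow_le_two_mul_log N hε θ).trans ?_
    have hscaled := mul_le_mul_of_nonneg_left hlog (sub_nonneg.mpr hπ)
    have hπ0 : 0 < 4 / Real.pi := by positivity
    linarith

end PrimeSums

section EulerProduct

lemma inv_one_sub_sq_sub_two_mul_le {q : ℝ} (hq : 0 ≤ q) (hq' : q ≤ 1 / 2) :
    1 / (1 - q) ^ 2 - 2 * q ≤ ((1 - q ^ 2)⁻¹) ^ 4 := by
  have hden : 0 < 1 - q := by linarith
  have hden2 : 0 < 1 - q ^ 2 := by nlinarith
  have htangent : 0 ≤ (q - 3 / 8) ^ 2 * (q + 3 / 4) := by positivity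
  have hq2 : q ^ 2 ≤ 1 / 4 := by nlinarith
  have hquotient : 0 ≤ 1 - 4 * q + q ^ 2 + 10 * q ^ 3 - q ^ 4 - 8 * q ^ 5 := by
    nlinarith [mul_nonneg (pow_nonneg hq 2) (sub_nonneg.mpr hq2),
      mul_nonneg (pow_nonneg hq 3) (sub_nonneg.mpr hq2), sq_nonneg (q - 3 / 8)]
  have hpoly : (1 - q ^ 2) ^ 2 * ((1 + q) ^ 2 - 2 * q * (1 - q ^ 2) ^ 2) ≤ 1 := by
    have hq9 := pow_nonneg hq 9
    nlinarith [mul_nonneg (pow_nonneg hq 2) hquotient]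
  calc 1 / (1 - q) ^ 2 - 2 * q
      = (1 - q ^ 2) ^ 2 * ((1 + q) ^ 2 - 2 * q * (1 - q ^ 2) ^ 2) * ((1 - q ^ 2)⁻¹) ^ 4 := by
        rw [show 1 - q ^ 2 = (1 - q) * (1 + q) by ring]
        field_simp
    _ ≤ ((1 - q ^ 2)⁻¹) ^ 4 := mul_le_of_le_one_left (by positivity) hpoly

lemma prod_primesBelow_inv_one_sub_sq_le (N : ℕ) :
    ∏ p ∈ N.primesBelow, (1 - (1 / (p : ℝ)) ^ 2)⁻¹ ≤ Real.pi ^ 2 / 6 := by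
  let f : ℕ →* ℝ :=
    { toFun n := (1 / (n : ℝ)) ^ 2
      map_one' := by simp
      map_mul' m n := by simp [mul_pow, mul_comm] }
  have hsum : HasSum f (Real.pi ^ 2 / 6) :=
    hasSum_zeta_two.congr_fun fun n ↦ one_div_pow (n : ℝ) 2
  calc _ = ∑' n : N.smoothNumbers, f n :=
        EulerProduct.prod_primesBelow_geometric_eq_tsum_smoothNumbers hsum.summable N
    _ ≤ ∑' n, f n := hsum.summable.tsum_subtype_le f N.smoothNumbers fun n ↦ sq_nonneg _
    _ = Real.pi ^ 2 / 6 := hsum.tsum_eq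

lemma hasSum_add_one_mul_pow {q : ℝ} (hq : 0 ≤ q) (hq' : q < 1) :
    HasSum (fun e : ℕ ↦ (e + 1) * q ^ e) (1 / (1 - q) ^ 2) := by
  simpa using hasSum_choose_mul_geometric_of_norm_lt_one 1 (r := q)
    (by rwa [Real.norm_of_nonneg hq])

variable {f : ℕ → ℝ} (hf : ∀ n, 0 ≤ f n) (hf_one : f 1 = 1)
  (hf_pow : ∀ {p : ℕ}, p.Prime → ∀ e : ℕ, f (p ^ e) ≤ (e + 1) * (1 / (p : ℝ)) ^ e)

include hf hf_pow in
lemma summable_primePow_of_le {p : ℕ} (hp : p.Prime) : Summable fun e : ℕ ↦ f (p ^ e) :=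
  .of_nonneg_of_le (fun e ↦ hf _) (hf_pow hp) (hasSum_add_one_mul_pow (by positivity)
    ((div_lt_one (by exact_mod_cast hp.pos)).mpr (by exact_mod_cast hp.one_lt))).summable

include hf hf_one hf_pow in
lemma tsum_primePow_le {p : ℕ} (hp : p.Prime) :
    ∑' e : ℕ, f (p ^ e) ≤ Real.exp (f p) * ((1 - (1 / (p : ℝ)) ^ 2)⁻¹) ^ 4 := by
  have hq : 1 / (p : ℝ) ≤ 1 / 2 := by gcongr; exact_mod_cast hp.two_le
  have hmajorant := hasSum_add_one_mul_pow (q := 1 / (p : ℝ)) (by positivity) (by linarith)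
  have hsum := summable_primePow_of_le hf hf_pow hp
  have htail : ∑' e : ℕ, f (p ^ (e + 2)) ≤ 1 / (1 - 1 / (p : ℝ)) ^ 2 - 1 - 2 * (1 / p) := by
    refine (((summable_nat_add_iff 2).mpr hsum).tsum_le_tsum (fun e ↦ hf_pow hp (e + 2))
      ((summable_nat_add_iff 2).mpr hmajorant.summable)).trans_eq ?_
    have hsplit := hmajorant.summable.sum_add_tsum_nat_add 2
    rw [hmajorant.tsum_eq, Finset.sum_range_succ, Finset.sum_range_one] at hsplit
    norm_num at hsplit ⊢
    linarith
  have hhead := hsum.sum_add_tsum_nat_add 2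
  rw [Finset.sum_range_succ, Finset.sum_range_one, pow_zero, pow_one, hf_one] at hhead
  have hone : 1 ≤ (1 - (1 / (p : ℝ)) ^ 2)⁻¹ := by
    have : (1 / (p : ℝ)) ^ 2 ≤ (1 / 2) ^ 2 := by gcongr
    exact one_le_inv₀ (by linarith) |>.mpr (sub_le_self _ (by positivity))
  calc ∑' e : ℕ, f (p ^ e) ≤ f p * 1 + (1 / (1 - 1 / (p : ℝ)) ^ 2 - 2 * (1 / p)) := by linarith
    _ ≤ f p * ((1 - (1 / (p : ℝ)) ^ 2)⁻¹) ^ 4 + ((1 - (1 / (p : ℝ)) ^ 2)⁻¹) ^ 4 := by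
        gcongr
        · exact hf p
        · exact one_le_pow₀ hone
        · exact inv_one_sub_sq_sub_two_mul_le (by positivity) hq
    _ = (f p + 1) * ((1 - (1 / (p : ℝ)) ^ 2)⁻¹) ^ 4 := by ring
    _ ≤ _ := by gcongr; exact Real.add_one_le_exp _

include hf hf_one hf_pow in
lemma sum_Icc_le_exp_sum_primesBelow
    (hf_mul : ∀ {m n : ℕ}, m.Coprime n → f (m * n) = f m * f n) (N : ℕ) :
    ∑ n ∈ Finset.Icc 1 N, f n ≤
      Real.exp (∑ p ∈ (N + 1).primesBelow, f p) * (Real.pi ^ 2 / 6) ^ 4 := by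
  have hprod := (EulerProduct.summable_and_hasSum_smoothNumbers_prod_primesBelow_tsum hf_one hf_mul
    (fun hp ↦ (summable_primePow_of_le hf hf_pow hp).norm) (N + 1)).2
  have hsmooth : ∀ n ∈ Finset.Icc 1 N, n ∈ (N + 1).smoothNumbers := fun n hn ↦ by
    rw [Finset.mem_Icc] at hn
    exact Nat.mem_smoothNumbers_of_lt hn.1 (by lia)
  calc ∑ n ∈ Finset.Icc 1 N, f n ≤ ∏ p ∈ (N + 1).primesBelow, ∑' e : ℕ, f (p ^ e) := by
        rw [← hprod.tsum_eq, ← Finset.sum_subtype_of_mem _ hsmooth]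
        exact hprod.summable.sum_le_tsum _ fun n _ ↦ hf n
    _ ≤ ∏ p ∈ (N + 1).primesBelow, (Real.exp (f p) * ((1 - (1 / (p : ℝ)) ^ 2)⁻¹) ^ 4) :=
        Finset.prod_le_prod (fun p _ ↦ tsum_nonneg fun e ↦ hf _) fun p hp ↦
          tsum_primePow_le hf hf_one hf_pow (Nat.prime_of_mem_primesBelow hp)
    _ = Real.exp (∑ p ∈ (N + 1).primesBelow, f p) *
          (∏ p ∈ (N + 1).primesBelow, (1 - (1 / (p : ℝ)) ^ 2)⁻¹) ^ 4 := by
        rw [Finset.prod_mul_distrib, ← Real.exp_sum, Finset.prod_pow]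
    _ ≤ _ := by
        gcongr
        · refine Finset.prod_nonneg fun p _ ↦ inv_nonneg.mpr (sub_nonneg.mpr ?_)
          exact pow_le_one₀ (by positivity) (by rw [one_div]; exact Nat.cast_inv_le_one p)
        · exact prod_primesBelow_inv_one_sub_sq_le (N + 1)

end EulerProduct

section TwistedDivisorSum

/-- The twisted divisor function `τ(n, θ) = ∑_{d ∣ n} d ^ (iθ)`, the Fourier transform of the
counting measure of `{log d : d ∣ n}`. -/
noncomputable def twistedDivisorSum (θ : ℝ) (n : ℕ) : ℂ :=
  ∑ d ∈ n.divisors, (d : ℂ) ^ (θ * Complex.I)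

lemma twistedDivisorSum_mul_of_coprime (θ : ℝ) {m n : ℕ} (h : m.Coprime n) :
    twistedDivisorSum θ (m * n) = twistedDivisorSum θ m * twistedDivisorSum θ n := by
  let f : ArithmeticFunction ℂ :=
    ⟨fun d ↦ if d = 0 then 0 else (d : ℂ) ^ (θ * Complex.I), if_pos rfl⟩
  have hf : f.IsMultiplicative := by
    rw [ArithmeticFunction.IsMultiplicative.iff_ne_zero]
    refine ⟨by simp [f], fun {m n} hm hn _ ↦ ?_⟩
    simp only [f, ArithmeticFunction.coe_mk, if_neg hm, if_neg hn, if_neg (mul_ne_zero hm hn)]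
    rw [Nat.cast_mul, Complex.natCast_mul_natCast_cpow]
  have hconv : ∀ n, twistedDivisorSum θ n = (ArithmeticFunction.zeta * f) n := fun n ↦ by
    rw [ArithmeticFunction.coe_zeta_mul_apply]
    exact Finset.sum_congr rfl fun d hd ↦ (if_neg (Nat.pos_of_mem_divisors hd).ne').symm
  simp only [hconv]
  exact (ArithmeticFunction.isMultiplicative_zeta.natCast.mul hf).map_mul_of_coprime h

lemma norm_twistedDivisorSum_le (θ : ℝ) (n : ℕ) : ‖twistedDivisorSum θ n‖ ≤ n.divisors.card := by
  refine (norm_sum_le _ _).trans_eq ?_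
  rw [← Nat.smul_one_eq_cast, ← Finset.sum_const]
  refine Finset.sum_congr rfl fun d hd ↦ ?_
  rw [natCast_cpow_mul_I (Nat.pos_of_mem_divisors hd).ne', Complex.norm_exp_ofReal_mul_I]

lemma twistedDivisorSum_prime (θ : ℝ) {p : ℕ} (hp : p.Prime) :
    twistedDivisorSum θ p = 1 + (p : ℂ) ^ (θ * Complex.I) := by
  rw [twistedDivisorSum, hp.sum_divisors, Nat.cast_one, Complex.one_cpow, add_comm]

lemma continuous_twistedDivisorSum (n : ℕ) : Continuous fun θ ↦ twistedDivisorSum θ n := by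
  refine continuous_finsetSum _ fun d hd ↦ ?_
  simp only [natCast_cpow_mul_I (Nat.pos_of_mem_divisors hd).ne']
  fun_prop

/-- The general term of the Dirichlet series of `n ↦ t ^ ω(n) * |τ(n, θ)|` at `1 + ε`. -/
noncomputable def twistedTerm (t θ ε : ℝ) (n : ℕ) : ℝ :=
  t ^ n.primeFactors.card * ‖twistedDivisorSum θ n‖ * (n : ℝ) ^ (-(1 + ε))

lemma twistedTerm_one (t θ ε : ℝ) : twistedTerm t θ ε 1 = 1 := by
  simp [twistedTerm, twistedDivisorSum]

lemma twistedTerm_mul_of_coprime (t θ ε : ℝ) {m n : ℕ} (h : m.Coprime n) :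
    twistedTerm t θ ε (m * n) = twistedTerm t θ ε m * twistedTerm t θ ε n := by
  simp only [twistedTerm]
  rw [twistedDivisorSum_mul_of_coprime θ h, norm_mul, h.primeFactors_mul,
    Finset.card_union_of_disjoint h.disjoint_primeFactors, pow_add, Nat.cast_mul,
    Real.mul_rpow (by positivity) (by positivity)]
  ring

lemma twistedTerm_prime (t θ ε : ℝ) {p : ℕ} (hp : p.Prime) :
    twistedTerm t θ ε p = t * (‖1 + (p : ℂ) ^ (θ * Complex.I)‖ * (p : ℝ) ^ (-(1 + ε))) := by
  rw [twistedTerm, twistedDivisorSum_prime θ hp, hp.primeFactors, Finset.card_singleton, pow_one,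
    mul_assoc]

variable {t ε : ℝ} (ht : 0 ≤ t) (ht' : t ≤ 1)
include ht

lemma twistedTerm_nonneg (θ ε : ℝ) (n : ℕ) : 0 ≤ twistedTerm t θ ε n := by
  unfold twistedTerm
  positivity

include ht'

lemma twistedTerm_primePow_le (θ : ℝ) (hε : 0 ≤ ε) {p : ℕ} (hp : p.Prime) (e : ℕ) :
    twistedTerm t θ ε (p ^ e) ≤ (e + 1) * (1 / (p : ℝ)) ^ e := by
  have hτ : ‖twistedDivisorSum θ (p ^ e)‖ ≤ e + 1 := by
    simpa [Nat.divisors_prime_pow hp] using norm_twistedDivisorSum_le θ (p ^ e)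
  have hrpow : ((p ^ e : ℕ) : ℝ) ^ (-(1 + ε)) ≤ (1 / (p : ℝ)) ^ e := by
    have hbase : (1 : ℝ) ≤ (p ^ e : ℕ) := by exact_mod_cast Nat.one_le_pow _ _ hp.pos
    refine (Real.rpow_le_rpow_of_exponent_le hbase (by linarith : -(1 + ε) ≤ -1)).trans_eq ?_
    rw [Real.rpow_neg_one, Nat.cast_pow, one_div, inv_pow]
  calc twistedTerm t θ ε (p ^ e) ≤ 1 * (e + 1) * (1 / (p : ℝ)) ^ e := by
        unfold twistedTerm
        gcongr
        exact pow_le_one₀ ht ht'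
    _ = (e + 1) * (1 / (p : ℝ)) ^ e := by rw [one_mul]

lemma sum_primes_twistedTerm_le {θ : ℝ} (hε : 0 < ε) (hε' : ε ≤ 1 / 100) (hθ : 0 < θ)
    (hθ' : θ ≤ 1 / 2) (N : ℕ) :
    ∑ p ∈ N.primesBelow, twistedTerm t θ ε p ≤
      4 + Real.log (1 + 1 / ε) * (4 * t / Real.pi) + Real.log θ * (4 / Real.pi - 2) := by
  have hπ : 4 / Real.pi ≤ 2 := by
    rw [div_le_iff₀ Real.pi_pos]
    linarith [Real.two_le_pi]
  have hlog : 0 ≤ -(2 - 4 / Real.pi) * Real.log θ + 4 := by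
    nlinarith [Real.log_nonpos hθ.le (by linarith)]
  calc _ = t * ∑ p ∈ N.primesBelow, ‖1 + (p : ℂ) ^ (θ * Complex.I)‖ * (p : ℝ) ^ (-(1 + ε)) := by
        rw [Finset.mul_sum]
        exact Finset.sum_congr rfl fun p hp ↦
          twistedTerm_prime t θ ε (Nat.prime_of_mem_primesBelow hp)
    _ ≤ t * (4 / Real.pi * Real.log (1 + 1 / ε) + (-(2 - 4 / Real.pi) * Real.log θ + 4)) := by
        gcongr
        linarith [sum_primes_norm_one_add_cpow_le N hε hε' hθ hθ']
    _ ≤ t * (4 / Real.pi * Real.log (1 + 1 / ε)) + (-(2 - 4 / Real.pi) * Real.log θ + 4) := by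
        rw [mul_add]
        gcongr
        exact mul_le_of_le_one_left hlog ht'
    _ = _ := by ring

lemma sum_twistedTerm_le {θ : ℝ} (hε : 0 < ε) (hε' : ε ≤ 1 / 100) (hθ : 0 < θ)
    (hθ' : θ ≤ 1 / 2) (N : ℕ) :
    ∑ n ∈ Finset.Icc 1 N, twistedTerm t θ ε n ≤
      (Real.pi ^ 2 / 6) ^ 4 * Real.exp 4 * (1 + 1 / ε) ^ (4 * t / Real.pi) *
        θ ^ (4 / Real.pi - 2) :=
  calc _ ≤ Real.exp (∑ p ∈ (N + 1).primesBelow, twistedTerm t θ ε p) * (Real.pi ^ 2 / 6) ^ 4 :=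
        sum_Icc_le_exp_sum_primesBelow (twistedTerm_nonneg ht θ ε) (twistedTerm_one t θ ε)
          (twistedTerm_primePow_le ht ht' θ hε.le) (twistedTerm_mul_of_coprime t θ ε) N
    _ ≤ Real.exp (4 + Real.log (1 + 1 / ε) * (4 * t / Real.pi) +
          Real.log θ * (4 / Real.pi - 2)) * (Real.pi ^ 2 / 6) ^ 4 := by
        gcongr
        exact sum_primes_twistedTerm_le ht ht' hε hε' hθ hθ' (N + 1)
    _ = _ := by
        rw [Real.exp_add, Real.exp_add, ← Real.rpow_def_of_pos hθ,
          ← Real.rpow_def_of_pos (by positivity)]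
        ring

end TwistedDivisorSum

section Fejer

/-- The Fejér kernel `8 (1 - cos (v / 2)) / v²`, written as the cosine transform of a function
supported on `[0, 1/2]`. -/
noncomputable def fejerKernel (v : ℝ) : ℝ :=
  ∫ θ in (0 : ℝ)..1 / 2, 4 * (1 - 2 * θ) * Real.cos (θ * v)

lemma fejerKernel_zero : fejerKernel 0 = 1 := by
  simp only [fejerKernel, mul_zero, Real.cos_zero, mul_one, intervalIntegral.integral_const_mul]
  rw [intervalIntegral.integral_sub (Continuous.intervalIntegrable (by fun_prop) _ _)
    (Continuous.intervalIntegrable (by fun_prop) _ _), intervalIntegral.integral_const_mul,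
    integral_id, intervalIntegral.integral_const]
  norm_num

lemma fejerKernel_of_ne_zero {v : ℝ} (hv : v ≠ 0) :
    fejerKernel v = 8 * (1 - Real.cos (v / 2)) / v ^ 2 := by
  have hderiv : ∀ θ ∈ uIcc (0 : ℝ) (1 / 2), HasDerivAt
      (fun θ ↦ 4 * ((1 - 2 * θ) * Real.sin (θ * v) / v - 2 * Real.cos (θ * v) / v ^ 2))
      (4 * (1 - 2 * θ) * Real.cos (θ * v)) θ := fun θ _ ↦ by
    have hlin : HasDerivAt (fun θ : ℝ ↦ θ * v) v θ := by simpa using (hasDerivAt_id θ).mul_const v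
    have hweight : HasDerivAt (fun θ : ℝ ↦ 1 - 2 * θ) (-2) θ := by
      simpa using ((hasDerivAt_id θ).const_mul 2).const_sub 1
    refine ((((hweight.mul hlin.sin).div_const v).sub
      ((hlin.cos.const_mul 2).div_const (v ^ 2))).const_mul 4).congr_deriv ?_
    field_simp
    ring
  rw [fejerKernel, intervalIntegral.integral_eq_sub_of_hasDerivAt hderiv
    (Continuous.intervalIntegrable (by fun_prop) _ _), zero_mul, Real.cos_zero, Real.sin_zero,
    one_div_mul_eq_div]
  ring

lemma fejerKernel_nonneg (v : ℝ) : 0 ≤ fejerKernel v := by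
  obtain rfl | hv := eq_or_ne v 0
  · rw [fejerKernel_zero]
    exact zero_le_one
  · rw [fejerKernel_of_ne_zero hv]
    have hcos := sub_nonneg.mpr (Real.cos_le_one (v / 2))
    positivity

lemma le_fejerKernel {v : ℝ} (hv : |v| ≤ 1 / 2) : 31 / 32 ≤ fejerKernel v :=
  calc (31 / 32 : ℝ) = ∫ θ in (0 : ℝ)..1 / 2, 4 * (1 - 2 * θ) * Real.cos (θ * 0) * (31 / 32) := by
        rw [intervalIntegral.integral_mul_const, ← fejerKernel, fejerKernel_zero, one_mul]
    _ ≤ fejerKernel v := by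
        refine intervalIntegral.integral_mono_on (by norm_num)
          (Continuous.intervalIntegrable (by fun_prop) _ _)
          (Continuous.intervalIntegrable (by fun_prop) _ _) fun θ hθ ↦ ?_
        have hθ' : 0 ≤ 1 - 2 * θ := by linarith [hθ.2]
        have habs : |θ * v| ≤ 1 / 4 := by
          rw [abs_mul, abs_of_nonneg hθ.1]
          nlinarith [hθ.1, hθ.2, abs_nonneg v]
        rw [mul_zero, Real.cos_zero, mul_one]
        gcongr
        refine le_trans ?_ Real.one_sub_sq_div_two_le_cos
        nlinarith [sq_le_sq₀ (abs_nonneg _) (by norm_num) |>.mpr habs, sq_abs (θ * v)]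

lemma sum_cos_mul_log_sub_le_norm_twistedDivisorSum (θ c : ℝ) (n : ℕ) :
    ∑ d ∈ n.divisors, Real.cos (θ * (Real.log d - c)) ≤ ‖twistedDivisorSum θ n‖ := by
  have hre : ∑ d ∈ n.divisors, Real.cos (θ * (Real.log d - c)) =
      (twistedDivisorSum θ n * Complex.exp ((-(θ * c) : ℝ) * Complex.I)).re := by
    rw [twistedDivisorSum, Finset.sum_mul, Complex.re_sum]
    refine Finset.sum_congr rfl fun d hd ↦ ?_
    rw [natCast_cpow_mul_I (Nat.pos_of_mem_divisors hd).ne', ← Complex.exp_add, ← add_mul,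
      ← Complex.ofReal_add, Complex.exp_ofReal_mul_I_re, mul_sub, sub_eq_add_neg]
  rw [hre]
  refine (Complex.re_le_norm _).trans_eq ?_
  rw [norm_mul, Complex.norm_exp_ofReal_mul_I, mul_one]

lemma sum_fejerKernel_log_sub_le (n : ℕ) (c : ℝ) :
    ∑ d ∈ n.divisors, fejerKernel (Real.log d - c) ≤
      4 * ∫ θ in (0 : ℝ)..1 / 2, ‖twistedDivisorSum θ n‖ := by
  simp only [fejerKernel]
  rw [← intervalIntegral.integral_finsetSum
    (fun d _ ↦ Continuous.intervalIntegrable (by fun_prop) _ _),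
    ← intervalIntegral.integral_const_mul]
  have hcont := continuous_twistedDivisorSum n
  refine intervalIntegral.integral_mono_on (by norm_num)
    (Continuous.intervalIntegrable (by fun_prop) _ _)
    (Continuous.intervalIntegrable (by fun_prop) _ _) fun θ hθ ↦ ?_
  have hθ' : 0 ≤ 1 - 2 * θ := by linarith [hθ.2]
  rw [← Finset.mul_sum]
  calc _ ≤ 4 * (1 - 2 * θ) * ‖twistedDivisorSum θ n‖ := by
        gcongr
        exact sum_cos_mul_log_sub_le_norm_twistedDivisorSum θ c n
    _ ≤ 4 * ‖twistedDivisorSum θ n‖ := by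
        gcongr
        linarith [hθ.1]

lemma exists_hooleyDelta_eq (n : ℕ) : ∃ u : ℝ, hooleyDelta n =
    (n.divisors.filter fun d : ℕ ↦ Real.exp u < d ∧ d ≤ Real.exp (u + 1)).card :=
  Nat.sSup_mem
    (s := {m | ∃ u : ℝ, m =
      (n.divisors.filter fun d : ℕ ↦ Real.exp u < d ∧ d ≤ Real.exp (u + 1)).card})
    ⟨_, 0, rfl⟩ ⟨n.divisors.card, by rintro m ⟨u, rfl⟩; exact Finset.card_filter_le _ _⟩

lemma hooleyDelta_le_card_divisors (n : ℕ) : hooleyDelta n ≤ n.divisors.card := by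
  obtain ⟨u, hu⟩ := exists_hooleyDelta_eq n
  exact hu ▸ Finset.card_filter_le _ _

lemma hooleyDelta_le_integral (n : ℕ) :
    (hooleyDelta n : ℝ) ≤ 128 / 31 * ∫ θ in (0 : ℝ)..1 / 2, ‖twistedDivisorSum θ n‖ := by
  obtain ⟨u, hu⟩ := exists_hooleyDelta_eq n
  have hkernel : (hooleyDelta n : ℝ) * (31 / 32) ≤
      ∑ d ∈ n.divisors, fejerKernel (Real.log d - (u + 1 / 2)) := by
    rw [hu, ← nsmul_eq_mul, ← Finset.sum_const]
    refine (Finset.sum_le_sum fun d hd ↦ ?_).trans (Finset.sum_le_sum_of_subset_of_nonneg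
      (Finset.filter_subset _ _) fun d _ _ ↦ fejerKernel_nonneg _)
    obtain ⟨-, hlt, hle⟩ := Finset.mem_filter.mp hd
    have hd0 : (0 : ℝ) < d := (Real.exp_pos u).trans hlt
    rw [← Real.lt_log_iff_exp_lt hd0] at hlt
    rw [← Real.log_le_iff_le_exp hd0] at hle
    exact le_fejerKernel (abs_le.mpr ⟨by linarith, by linarith⟩)
  linarith [hkernel.trans (sum_fejerKernel_log_sub_le n _)]

end Fejer

section Rankin

lemma intervalIntegrable_rpow_four_div_pi_sub_two :
    IntervalIntegrable (fun θ : ℝ ↦ θ ^ (4 / Real.pi - 2)) volume 0 (1 / 2) := by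
  refine intervalIntegral.intervalIntegrable_rpow' ?_
  linarith [(one_lt_div Real.pi_pos).mpr Real.pi_lt_four]

lemma integral_rpow_four_div_pi_sub_two_le :
    ∫ θ in (0 : ℝ)..1 / 2, θ ^ (4 / Real.pi - 2) ≤ 3.17 := by
  have hβ : 0.2732 ≤ 4 / Real.pi - 1 := by
    rw [le_sub_iff_add_le, le_div_iff₀ Real.pi_pos]
    linarith [Real.pi_lt_d4]
  have hβ' : 4 / Real.pi - 1 ≤ 1 := by
    rw [sub_le_iff_le_add, div_le_iff₀ Real.pi_pos]
    linarith [Real.two_le_pi]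
  rw [integral_rpow (Or.inl (by linarith)), show 4 / Real.pi - 2 + 1 = 4 / Real.pi - 1 by ring,
    Real.zero_rpow (by linarith), sub_zero, div_le_iff₀ (by linarith)]
  have hbernoulli := rpow_one_add_le_one_add_mul_self (s := -(1 / 2)) (by norm_num)
    (by linarith) hβ'
  norm_num at hbernoulli ⊢
  linarith

lemma inv_le_exp_one_mul_rpow {L : ℝ} (hL : 0 < L) {n : ℕ} (hn : 1 ≤ n)
    (hnL : Real.log n ≤ L) : (n : ℝ)⁻¹ ≤ Real.exp 1 * (n : ℝ) ^ (-(1 + 1 / L)) := by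
  have hn0 : (0 : ℝ) < n := by exact_mod_cast hn
  rw [← Real.rpow_neg_one, Real.rpow_def_of_pos hn0, Real.rpow_def_of_pos hn0, ← Real.exp_add]
  gcongr
  have hratio : Real.log n / L ≤ 1 := (div_le_one hL).mpr hnL
  linear_combination hratio

lemma sum_div_le_exp_one_mul_sum {a : ℕ → ℝ} (ha : ∀ n, 0 ≤ a n) {L : ℝ} (hL : 0 < L) {N : ℕ}
    (hNL : Real.log N ≤ L) :
    ∑ n ∈ Finset.Icc 1 N, a n / n ≤
      Real.exp 1 * ∑ n ∈ Finset.Icc 1 N, a n * (n : ℝ) ^ (-(1 + 1 / L)) := by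
  rw [Finset.mul_sum]
  refine Finset.sum_le_sum fun n hn ↦ ?_
  obtain ⟨hn1, hnN⟩ := Finset.mem_Icc.mp hn
  have hlog := Real.log_le_log (by exact_mod_cast hn1) (Nat.cast_le (α := ℝ).mpr hnN)
  rw [div_eq_mul_inv, mul_left_comm]
  exact mul_le_mul_of_nonneg_left (inv_le_exp_one_mul_rpow hL hn1 (hlog.trans hNL)) (ha n)

lemma log_exp_one_mul {x : ℝ} (hx : 0 < x) : Real.log (Real.exp 1 * x) = 1 + Real.log x := by
  rw [Real.log_mul (Real.exp_pos 1).ne' hx.ne', Real.log_exp]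

lemma one_add_rpow_le {L a : ℝ} (hL : 100 ≤ L) (ha : 0 ≤ a) (ha' : a ≤ 2) :
    (1 + L) ^ a ≤ (101 / 100) ^ 2 * L ^ a :=
  calc (1 + L) ^ a ≤ (101 / 100 * L) ^ a := by
        gcongr
        linarith
    _ = (101 / 100) ^ a * L ^ a := Real.mul_rpow (by norm_num) (by linarith)
    _ ≤ (101 / 100) ^ (2 : ℝ) * L ^ a := by
        gcongr
        norm_num
    _ = (101 / 100) ^ 2 * L ^ a := by rw [Real.rpow_two]

lemma hooleyDelta_constant_lt : Real.exp 1 * (128 / 31 * ((Real.pi ^ 2 / 6) ^ 4 * Real.exp 4 *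
    (101 / 100) ^ 2 * 3.17)) < 16748 := by
  have hexp : Real.exp 1 * Real.exp 4 ≤ 2.7182818286 ^ 5 := by
    rw [← Real.exp_add, show (1 : ℝ) + 4 = (5 : ℕ) * 1 by norm_num, Real.exp_nat_mul]
    gcongr
    exact Real.exp_one_lt_d9.le
  calc _ = Real.exp 1 * Real.exp 4 *
          (128 / 31 * ((Real.pi ^ 2 / 6) ^ 4 * (101 / 100) ^ 2 * 3.17)) := by ring
    _ ≤ 2.7182818286 ^ 5 * (128 / 31 * ((3.1416 ^ 2 / 6) ^ 4 * (101 / 100) ^ 2 * 3.17)) := by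
        gcongr
        exact Real.pi_lt_d4.le
    _ < 16748 := by norm_num

variable {t ε : ℝ} (ht : 0 ≤ t)
include ht

lemma hooleyDelta_mul_rpow_le_integral_twistedTerm (ε : ℝ) (n : ℕ) :
    t ^ n.primeFactors.card * (hooleyDelta n : ℝ) * (n : ℝ) ^ (-(1 + ε)) ≤
      128 / 31 * ∫ θ in (0 : ℝ)..1 / 2, twistedTerm t θ ε n := by
  simp only [twistedTerm]
  rw [intervalIntegral.integral_mul_const, intervalIntegral.integral_const_mul]
  calc _ ≤ t ^ n.primeFactors.card *
          (128 / 31 * ∫ θ in (0 : ℝ)..1 / 2, ‖twistedDivisorSum θ n‖) *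
            (n : ℝ) ^ (-(1 + ε)) := by
        gcongr
        exact hooleyDelta_le_integral n
    _ = _ := by ring

lemma sum_hooleyDelta_mul_rpow_le (ht' : t ≤ 1) (hε : 0 < ε) (hε' : ε ≤ 1 / 100) (N : ℕ) :
    ∑ n ∈ Finset.Icc 1 N,
        t ^ n.primeFactors.card * (hooleyDelta n : ℝ) * (n : ℝ) ^ (-(1 + ε)) ≤
      128 / 31 * ((Real.pi ^ 2 / 6) ^ 4 * Real.exp 4 * (1 + 1 / ε) ^ (4 * t / Real.pi) *
        3.17) := by
  have hcont : ∀ n : ℕ, Continuous fun θ ↦ twistedTerm t θ ε n := fun n ↦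
    ((continuous_twistedDivisorSum n).norm.const_mul _).mul_const _
  calc _ ≤ ∑ n ∈ Finset.Icc 1 N, 128 / 31 * ∫ θ in (0 : ℝ)..1 / 2, twistedTerm t θ ε n :=
        Finset.sum_le_sum fun n _ ↦ hooleyDelta_mul_rpow_le_integral_twistedTerm ht ε n
    _ = 128 / 31 * ∫ θ in (0 : ℝ)..1 / 2, ∑ n ∈ Finset.Icc 1 N, twistedTerm t θ ε n := by
        rw [← Finset.mul_sum, intervalIntegral.integral_finsetSum
          fun n _ ↦ (hcont n).intervalIntegrable _ _]
    _ ≤ 128 / 31 * ∫ θ in (0 : ℝ)..1 / 2, (Real.pi ^ 2 / 6) ^ 4 * Real.exp 4 *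
          (1 + 1 / ε) ^ (4 * t / Real.pi) * θ ^ (4 / Real.pi - 2) := by
        gcongr
        exact intervalIntegral.integral_mono_on_of_le_Ioo (by norm_num)
          ((continuous_finsetSum _ fun n _ ↦ hcont n).intervalIntegrable _ _)
          (intervalIntegrable_rpow_four_div_pi_sub_two.const_mul _)
          fun θ hθ ↦ sum_twistedTerm_le ht ht' hε hε' hθ.1 hθ.2.le N
    _ ≤ _ := by
        rw [intervalIntegral.integral_const_mul]
        gcongr
        exact integral_rpow_four_div_pi_sub_two_le

lemma sum_hooleyDelta_div_lt_of_le_log {x : ℝ} (hx : 1 ≤ x) (ht' : t ≤ 1)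
    (hL : 100 ≤ Real.log (Real.exp 1 * x)) :
    ∑ n ∈ Finset.Icc 1 ⌊x⌋₊, t ^ n.primeFactors.card * (hooleyDelta n : ℝ) / n <
      16748 * Real.log (Real.exp 1 * x) ^ (4 * t / Real.pi) := by
  have hx0 : 0 < x := by linarith
  have hlog : Real.log ⌊x⌋₊ ≤ Real.log (Real.exp 1 * x) := by
    have hfloor := Real.log_le_log (by exact_mod_cast Nat.floor_pos.mpr hx) (Nat.floor_le hx0.le)
    linarith [log_exp_one_mul hx0]
  set L := Real.log (Real.exp 1 * x)
  have hL0 : 0 < L := by linarith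
  have hε : 1 / L ≤ 1 / 100 := one_div_le_one_div_of_le (by norm_num) hL
  have hexponent : 4 * t / Real.pi ≤ 2 := by
    rw [div_le_iff₀ Real.pi_pos]
    linarith [Real.two_le_pi]
  calc _ ≤ Real.exp 1 * ∑ n ∈ Finset.Icc 1 ⌊x⌋₊, t ^ n.primeFactors.card * (hooleyDelta n : ℝ) *
          (n : ℝ) ^ (-(1 + 1 / L)) :=
        sum_div_le_exp_one_mul_sum (fun n ↦ by positivity) hL0 hlog
    _ ≤ Real.exp 1 * (128 / 31 * ((Real.pi ^ 2 / 6) ^ 4 * Real.exp 4 *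
          (1 + 1 / (1 / L)) ^ (4 * t / Real.pi) * 3.17)) := by
        gcongr
        exact sum_hooleyDelta_mul_rpow_le ht ht' (by positivity) hε _
    _ ≤ Real.exp 1 * (128 / 31 * ((Real.pi ^ 2 / 6) ^ 4 * Real.exp 4 *
          ((101 / 100) ^ 2 * L ^ (4 * t / Real.pi)) * 3.17)) := by
        rw [one_div_one_div]
        gcongr
        exact one_add_rpow_le hL (by positivity) hexponent
    _ = Real.exp 1 * (128 / 31 * ((Real.pi ^ 2 / 6) ^ 4 * Real.exp 4 * (101 / 100) ^ 2 * 3.17)) *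
          L ^ (4 * t / Real.pi) := by ring
    _ < _ := by
        gcongr
        exact hooleyDelta_constant_lt

end Rankin

lemma sum_card_divisors_div_le (M : ℕ) :
    ∑ n ∈ Finset.Icc 1 M, (n.divisors.card : ℝ) / n ≤ (∑ n ∈ Finset.Icc 1 M, (n : ℝ)⁻¹) ^ 2 := by
  rw [sq, Finset.sum_mul_sum, ← Finset.sum_product']
  refine le_of_eq_of_le (Finset.sum_congr rfl fun n hn ↦ ?_)
    (Finset.sum_fiberwise_le_sum_of_sum_fiber_nonneg (t := Finset.Icc 1 M)
      (g := fun ab : ℕ × ℕ ↦ ab.1 * ab.2) fun n _ ↦ Finset.sum_nonneg fun ab _ ↦ by positivity)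
  obtain ⟨hn1, hnM⟩ := Finset.mem_Icc.mp hn
  have hfiber : (Finset.Icc 1 M ×ˢ Finset.Icc 1 M).filter (fun ab ↦ ab.1 * ab.2 = n) =
      n.divisorsAntidiagonal := by
    ext ⟨a, b⟩
    simp only [Finset.mem_filter, Finset.mem_product, Finset.mem_Icc,
      Nat.mem_divisorsAntidiagonal]
    refine ⟨fun h ↦ ⟨h.2, by omega⟩, fun ⟨hab, _⟩ ↦ ?_⟩
    have ha : 0 < a := Nat.pos_of_ne_zero fun h ↦ by simp_all
    have hb : 0 < b := Nat.pos_of_ne_zero fun h ↦ by simp_all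
    exact ⟨⟨⟨ha, by nlinarith⟩, hb, by nlinarith⟩, hab⟩
  rw [hfiber, div_eq_mul_inv, ← nsmul_eq_mul, ← Finset.sum_const,
    ← Nat.sum_divisorsAntidiagonal fun _ _ ↦ (n : ℝ)⁻¹]
  refine Finset.sum_congr rfl fun ab hab ↦ ?_
  rw [← (Nat.mem_divisorsAntidiagonal.mp hab).1, Nat.cast_mul, mul_inv]

lemma sum_hooleyDelta_div_le_sq {x t : ℝ} (hx : 1 ≤ x) (ht : 0 ≤ t) (ht' : t ≤ 1) :
    ∑ n ∈ Finset.Icc 1 ⌊x⌋₊, t ^ n.primeFactors.card * (hooleyDelta n : ℝ) / n ≤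
      Real.log (Real.exp 1 * x) ^ 2 := by
  have hharmonic : ∑ n ∈ Finset.Icc 1 ⌊x⌋₊, (n : ℝ)⁻¹ ≤ 1 + Real.log x := by
    simpa [harmonic_eq_sum_Icc] using harmonic_floor_le_one_add_log x hx
  calc _ ≤ ∑ n ∈ Finset.Icc 1 ⌊x⌋₊, (n.divisors.card : ℝ) / n := by
        gcongr with n
        exact (mul_le_of_le_one_left (Nat.cast_nonneg _) (pow_le_one₀ ht ht')).trans
          (Nat.cast_le.mpr (hooleyDelta_le_card_divisors n))
    _ ≤ (∑ n ∈ Finset.Icc 1 ⌊x⌋₊, (n : ℝ)⁻¹) ^ 2 := sum_card_divisors_div_le _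
    _ ≤ Real.log (Real.exp 1 * x) ^ 2 := by
        rw [log_exp_one_mul (by linarith)]
        gcongr

theorem statement_4 (x : ℝ) (hx : 1 ≤ x) (t : ℝ) (ht : t ∈ Set.Icc (0 : ℝ) 1) :
    ∑ n ∈ Finset.Icc 1 ⌊x⌋₊, t ^ n.primeFactors.card * (hooleyDelta n : ℝ) / n <
      16748 * Real.log (Real.exp 1 * x) ^ (4 * t / Real.pi) := by
  obtain ⟨ht0, ht1⟩ := ht
  rcases le_total 100 (Real.log (Real.exp 1 * x)) with hL | hL
  · exact sum_hooleyDelta_div_lt_of_le_log ht0 hx ht1 hL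
  · have hL1 : 1 ≤ Real.log (Real.exp 1 * x) := by
      rw [log_exp_one_mul (by linarith)]
      linarith [Real.log_nonneg hx]
    calc _ ≤ Real.log (Real.exp 1 * x) ^ 2 := sum_hooleyDelta_div_le_sq hx ht0 ht1
      _ < 16748 * 1 := by nlinarith
      _ ≤ 16748 * Real.log (Real.exp 1 * x) ^ (4 * t / Real.pi) := by
          gcongr
          exact Real.one_le_rpow hL1 (by positivity)
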